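/- arXiv:2010.06754 — 2 statements merged into one kernel-verified Lean document; each statement's English description precedes it below -/
import Mathlib

section
/- There exist positive constants Ω₀ and κ₀ such that the following holds: if (D, Ω) is a solution of the rotating patch equation with |D| = |B| = π and Ω ∈ (0, Ω₀), then either D = B or sup_{x ∈ ∂D} |x| > κ₀ · Ω^{-1/2}. -/
/-!
The proof is a moving plane argument, with `Ω₀ = 1/8` and `κ₀ = 1/4`.

Suppose `R = sup_{∂D} |x| ≤ κ₀ Ω^{-1/2}`. Then `D` lies in the closed disk of radius `R`, and all
distances within it are at most `2R`, where `2Ω(2R)² ≤ 1/2 < 1`. Expanding `|x - y|²` shows that,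
up to an affine function of `x` whose slope is a multiple of the first moment of `D`, `Ψ` is the
convolution of `1_D` with the radial kernel `W(z) = N(z) - Ω/(2π) |z|²`: here `|D| = π` is used.
This kernel is strictly increasing in `|z|` as long as `2Ω|z|² < 1` (`kerDiff_pos`), so on the
relevant scale it behaves like the Newtonian kernel itself, and the usual reflection comparison
works (`streamFun_sub_mirror`). The other ingredient is the maximum principle `Ψ ≤ c` in `D`,
`c` being the boundary value of `Ψ` (`streamFun_le`).

Fix a unit vector `e` for which the moment `∫_D ⟨e, y⟩` is nonpositive, and move the line
`⟨e, y⟩ = l` down from infinity as long as the cap of `D` beyond it is mirrored into `D`. At the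
critical position there is a touching point, either off the line (`symmetry_of_touching`) or as a
limit of points collapsing onto the line (`symmetry_of_tangency`, where the comparison is divided
by the distance to the line). In both cases the comparison is an integral of a nonnegative function,
bounded above by a positive multiple of the moment, so that the moment vanishes and `D` is
symmetric up to a null set; the center of mass then lies on the line, which therefore passes
through the origin (`moving_plane`).

Applied to `e` or `-e` this shows that all first moments vanish, and hence that the caps reflect
into `D` for every direction and every `l > 0`. Thus `D` contains with `x` every point of smaller
norm, so it is a centered disk (`eq_ball_of_capReflects`), of radius `1` by its area.
-/

open MeasureTheory Set Real Bornology

noncomputable section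

/-- The plane `ℝ²`. -/
abbrev R2 : Type := EuclideanSpace ℝ (Fin 2)

/-- The point of `ℝ²` with given coordinates. -/
def pt (a b : ℝ) : R2 := (EuclideanSpace.equiv (Fin 2) ℝ).symm ![a, b]

/-- The 2D Newtonian potential kernel `N(x) = (1/(2π)) log |x|`. -/
def nker (x : R2) : ℝ := (1 / (2 * π)) * Real.log ‖x‖

/-- The convolution `1_D * N`. -/
def patchConv (D : Set R2) (x : R2) : ℝ := ∫ y in D, nker (x - y)

/-- The relative stream function `Ψ(x) = (1_D * N)(x) − (Ω/2)|x|²`. -/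
def streamFun (D : Set R2) (Ω : ℝ) (x : R2) : ℝ := patchConv D x - Ω / 2 * ‖x‖ ^ 2

/-- `(D, Ω)` is a solution of the rotating patch equation: `D` is a bounded open
simply connected set whose boundary is a `C²` Jordan curve, and `Ψ` is constant
on `∂D`. -/
def IsPatchSolution (D : Set R2) (Ω : ℝ) : Prop :=
  IsOpen D ∧ IsBounded D ∧ SimplyConnectedSpace D ∧
  (∃ γ : ℝ → R2,
      ContDiff ℝ 2 γ ∧ Function.Periodic γ (2 * π) ∧
      Set.InjOn γ (Set.Ico 0 (2 * π)) ∧ (∀ t, deriv γ t ≠ 0) ∧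
      Set.range γ = frontier D) ∧
  (∃ c : ℝ, ∀ x ∈ frontier D, streamFun D Ω x = c)

/-- Rotation of the plane by angle `α` about the origin. -/
def rot (α : ℝ) (x : R2) : R2 :=
  pt (Real.cos α * x 0 - Real.sin α * x 1) (Real.sin α * x 0 + Real.cos α * x 1)

/-- `D` is `m`-fold symmetric. -/
def MFoldSymmetric (m : ℕ) (D : Set R2) : Prop := rot (2 * π / m) '' D = D

/-- Polar coordinates point `r(cos θ, sin θ)`. -/
def polar (r θ : ℝ) : R2 := pt (r * Real.cos θ) (r * Real.sin θ)

/-- The star-shaped domain with polar graph boundary `1 + u`. -/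
def polarDomain (u : ℝ → ℝ) : Set R2 :=
  {x | ∃ r θ : ℝ, 0 ≤ r ∧ r < 1 + u θ ∧ x = polar r θ}

/-- The polar graph `{(1+u(θ))(cos θ, sin θ)}`. -/
def polarGraph (u : ℝ → ℝ) : Set R2 := {x | ∃ θ : ℝ, x = polar (1 + u θ) θ}

/-- `L^∞` norm of a (continuous periodic) function on the torus. -/
def supNorm (u : ℝ → ℝ) : ℝ := ⨆ θ : ℝ, |u θ|

/-- The Fraenkel asymmetry. -/
def fraenkel (D : Set R2) : ℝ :=
  sInf (Set.range fun x : R2 =>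
    (volume (symmDiff D (Metric.ball x (Real.sqrt ((volume D).toReal / π))))).toReal
      / (volume D).toReal)

/-- Asymmetry with respect to the unit disk centered at the origin. -/
def asym0 (D : Set R2) : ℝ :=
  (volume (symmDiff D (Metric.ball (0 : R2) 1))).toReal / π

/-- The Laplacian in the plane. -/
def lap (p : R2 → ℝ) (x : R2) : ℝ :=
  ∑ i : Fin 2,
    fderiv ℝ (fun y => fderiv ℝ p y (EuclideanSpace.single i 1)) x (EuclideanSpace.single i 1)

/-- The radial function `g(r) = ℋ¹(∂B_r ∩ D)/(2πr)`, as a function on the plane. -/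
def sliceg (D : Set R2) (y : R2) : ℝ :=
  (μH[1] (Metric.sphere (0 : R2) ‖y‖ ∩ D)).toReal / (2 * π * ‖y‖)

/-- Convolution of `f` with the Newtonian potential over the plane. -/
def convN (f : R2 → ℝ) (x : R2) : ℝ := ∫ y, f y * nker (x - y)

open Filter Topology

/-! ### Null boundary and continuity of the potential -/

/-- A differentiable plane curve is the image of the null set `ℝ × {0}` under a differentiable map
of the plane, hence null. -/
lemma volume_range_eq_zero {γ : ℝ → R2} (hγ : Differentiable ℝ γ) : volume (range γ) = 0 := by
  have hp : volume {x : R2 | x 1 = 0} = 0 := by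
    have h := Measure.addHaar_submodule (volume : Measure R2)
      (LinearMap.ker (EuclideanSpace.proj 1 : R2 →L[ℝ] ℝ).toLinearMap) (by
        intro h
        have h1 : (EuclideanSpace.single 1 1 : R2) ∈
          LinearMap.ker (EuclideanSpace.proj 1 : R2 →L[ℝ] ℝ).toLinearMap := by
          rw [h]; trivial
        simp at h1)
    convert h using 2
    ext x; simp
  have h2 : range γ = (fun x : R2 => γ (x 0)) '' {x : R2 | x 1 = 0} := by
    ext y; constructor
    · rintro ⟨t, rfl⟩
      exact ⟨pt t 0, by simp [pt], by simp [pt]⟩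
    · rintro ⟨x, -, rfl⟩; exact ⟨_, rfl⟩
  rw [h2]
  apply addHaar_image_eq_zero_of_differentiableOn_of_addHaar_eq_zero _ _ hp
  have : Differentiable ℝ (fun x : R2 => x 0) :=
    (EuclideanSpace.proj 0 : R2 →L[ℝ] ℝ).differentiable
  exact (hγ.comp this).differentiableOn

lemma integrableOn_inv_norm (L : ℝ) :
    IntegrableOn (fun u : R2 => ‖u‖⁻¹) (Metric.closedBall 0 L) := by
  have h : IntegrableOn (fun u : R2 => ‖u‖⁻¹) (Metric.ball 0 (L + 1)) := by
    refine integrableOn_ball_of_norm_le_rpow (μ := volume) (C := 1) (α := 1)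
      (by simp) (by simp) (Eventually.of_forall fun x => ?_) ?_
    · rw [Real.rpow_neg_one]; simp
    · exact (by fun_prop : Measurable fun u : R2 => ‖u‖⁻¹).aestronglyMeasurable
  exact h.mono_set (Metric.closedBall_subset_ball (by linarith))

lemma measurable_nker : Measurable nker := by
  unfold nker; fun_prop

lemma abs_log_le_inv_add {r : ℝ} (hr : 0 ≤ r) : |Real.log r| ≤ r⁻¹ + r := by
  rcases hr.eq_or_lt with rfl | hr
  · simp
  have h1 := Real.log_le_sub_one_of_pos hr
  have h2 := Real.one_sub_inv_le_log_of_pos hr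
  have : 0 < r⁻¹ := by positivity
  rw [abs_le]; constructor <;> linarith

lemma integrableOn_nker (L : ℝ) : IntegrableOn nker (Metric.closedBall 0 L) := by
  have h1 : IntegrableOn (fun u : R2 => (1 / (2 * π)) * (‖u‖⁻¹ + ‖u‖)) (Metric.closedBall 0 L) := by
    refine ((integrableOn_inv_norm L).add ?_).const_mul _
    exact continuous_norm.continuousOn.integrableOn_compact (isCompact_closedBall _ _)
  refine h1.mono' measurable_nker.aestronglyMeasurable (Eventually.of_forall fun u => ?_)
  rw [nker, norm_mul, Real.norm_eq_abs, Real.norm_eq_abs, abs_of_pos (by positivity)]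
  gcongr
  exact abs_log_le_inv_add (norm_nonneg _)

/-- The convolution of the indicator of `D` with a locally integrable kernel is continuous: since
`∂D` is a null set, `1_D (x - u)` depends continuously on `x` for almost every `u`. -/
lemma continuous_conv {D : Set R2} (hD : IsOpen D) (hb : IsBounded D)
    (hf : volume (frontier D) = 0) {k : R2 → ℝ} (hk : Measurable k)
    (hki : ∀ L : ℝ, IntegrableOn k (Metric.closedBall 0 L)) :
    Continuous fun x => ∫ y in D, k (x - y) := by
  obtain ⟨R, hR⟩ := hb.subset_closedBall (0 : R2)
  have hrw : ∀ x, ∫ y in D, k (x - y) = ∫ u, D.indicator (fun _ => (1 : ℝ)) (x - u) * k u := by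
    intro x
    rw [← integral_indicator hD.measurableSet,
      ← integral_sub_left_eq_self (D.indicator fun y => k (x - y)) volume x]
    congr 1; ext u
    by_cases h : x - u ∈ D <;> simp [h]
  simp_rw [hrw]
  rw [continuous_iff_continuousAt]
  intro x₀
  apply continuousAt_of_dominated
    (bound := (Metric.closedBall (0 : R2) (‖x₀‖ + 1 + R)).indicator fun u => ‖k u‖)
  · refine Eventually.of_forall fun x => Measurable.aestronglyMeasurable ?_
    exact ((measurable_const.indicator hD.measurableSet).comp
      (measurable_const.sub measurable_id)).mul hk
  · filter_upwards [Metric.ball_mem_nhds x₀ one_pos] with x hx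
    refine Eventually.of_forall fun u => ?_
    by_cases h : x - u ∈ D
    · have h1 : ‖x - u‖ ≤ R := by simpa using hR h
      have h2 : ‖x - x₀‖ < 1 := by simpa [dist_eq_norm] using hx
      have h3 : u ∈ Metric.closedBall (0 : R2) (‖x₀‖ + 1 + R) := by
        rw [mem_closedBall_zero_iff]
        have : u = x₀ + (x - x₀) - (x - u) := by abel
        rw [this]
        exact (norm_sub_le _ _).trans (add_le_add ((norm_add_le _ _).trans (by linarith)) h1)
      simp [h, h3]
    · simp only [indicator_of_notMem h, zero_mul, norm_zero]
      exact indicator_nonneg (fun _ _ => norm_nonneg _) _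
  · exact IntegrableOn.integrable_indicator (hki _).norm measurableSet_closedBall
  · have h1 : ∀ᵐ u : R2, x₀ - u ∉ frontier D := by
      have := (Measure.measurePreserving_sub_left (volume : Measure R2) x₀).quasiMeasurePreserving.ae
        (p := fun y => y ∉ frontier D) (by rw [ae_iff]; simpa using hf)
      exact this
    filter_upwards [h1] with u hu
    apply ContinuousAt.mul _ continuousAt_const
    exact ContinuousAt.comp (g := D.indicator fun _ => (1 : ℝ))
      (continuousOn_const.continuousAt_indicator hu) (continuousAt_id.sub continuousAt_const)

lemma integrableOn_comp_sub {D : Set R2} (hD : IsOpen D) (hb : IsBounded D) {k : R2 → ℝ}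
    (hki : ∀ L : ℝ, IntegrableOn k (Metric.closedBall 0 L)) (x : R2) :
    IntegrableOn (fun y => k (x - y)) D := by
  obtain ⟨R, hR⟩ := hb.subset_closedBall (0 : R2)
  have h := ((hki (‖x‖ + R)).integrable_indicator measurableSet_closedBall).comp_sub_left x
  refine (h.integrableOn (s := D)).congr_fun ?_ hD.measurableSet
  intro y hy
  have h1 : ‖y‖ ≤ R := by simpa using hR hy
  have : x - y ∈ Metric.closedBall (0 : R2) (‖x‖ + R) := by
    rw [mem_closedBall_zero_iff]
    exact (norm_sub_le _ _).trans (by linarith)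
  simp only [indicator_of_mem this]

lemma continuous_patchConv {D : Set R2} (hD : IsOpen D) (hb : IsBounded D)
    (hf : volume (frontier D) = 0) : Continuous (patchConv D) :=
  continuous_conv hD hb hf measurable_nker integrableOn_nker

lemma continuous_streamFun {D : Set R2} (hD : IsOpen D) (hb : IsBounded D)
    (hf : volume (frontier D) = 0) (Ω : ℝ) : Continuous (streamFun D Ω) := by
  have := continuous_patchConv hD hb hf
  unfold streamFun; fun_prop

/-! ### Maximum principle for the stream function -/

lemma norm_eq_complex (v : R2) : ‖v‖ = ‖(⟨v 0, v 1⟩ : ℂ)‖ := by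
  rw [EuclideanSpace.norm_eq, Complex.norm_eq_sqrt_sq_add_sq]
  simp [Fin.sum_univ_two]

lemma continuous_polar (ρ : ℝ) : Continuous (polar ρ) := by
  unfold polar pt
  refine (EuclideanSpace.equiv (Fin 2) ℝ).symm.continuous.comp ?_
  refine continuous_pi fun i => ?_
  fin_cases i <;> simp <;> fun_prop

lemma polar_apply_zero (ρ θ : ℝ) : polar ρ θ 0 = ρ * Real.cos θ := by simp [polar, pt]

lemma polar_apply_one (ρ θ : ℝ) : polar ρ θ 1 = ρ * Real.sin θ := by simp [polar, pt]

lemma norm_polar {ρ : ℝ} (hρ : 0 ≤ ρ) (θ : ℝ) : ‖polar ρ θ‖ = ρ := by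
  rw [EuclideanSpace.norm_eq, Fin.sum_univ_two, polar_apply_zero, polar_apply_one]
  simp only [Real.norm_eq_abs, sq_abs]
  rw [show (ρ * Real.cos θ) ^ 2 + (ρ * Real.sin θ) ^ 2 = ρ ^ 2 by
    linear_combination ρ ^ 2 * Real.sin_sq_add_cos_sq θ, Real.sqrt_sq hρ]

lemma integral_nker_circle {ρ : ℝ} (hρ : 0 < ρ) (x y : R2) :
    (2 * π)⁻¹ * ∫ θ in (0)..(2 * π), nker (x + polar ρ θ - y)
      = (1 / (2 * π)) * (Real.log ρ + Real.posLog (ρ⁻¹ * ‖x - y‖)) := by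
  have h := circleAverage_log_norm_sub_const_eq_log_radius_add_posLog
    (a := (⟨y 0, y 1⟩ : ℂ)) (c := ⟨x 0, x 1⟩) hρ.ne'
  rw [circleAverage_def, smul_eq_mul] at h
  have e1 : ∀ θ, nker (x + polar ρ θ - y)
      = (1 / (2 * π)) * Real.log ‖circleMap (⟨x 0, x 1⟩ : ℂ) ρ θ - ⟨y 0, y 1⟩‖ := by
    intro θ
    rw [nker, norm_eq_complex]
    congr 3
    apply Complex.ext <;> simp [circleMap, polar_apply_zero, polar_apply_one,
      Complex.exp_ofReal_mul_I_re, Complex.exp_ofReal_mul_I_im]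
  have e2 : ‖x - y‖ = ‖(⟨x 0, x 1⟩ : ℂ) - ⟨y 0, y 1⟩‖ := by
    rw [norm_eq_complex]
    congr 1
  simp_rw [e1]
  rw [intervalIntegral.integral_const_mul, e2, ← h]
  ring

lemma integral_sq_norm_circle (ρ : ℝ) (x : R2) :
    ∫ θ in (0)..(2 * π), ‖x + polar ρ θ‖ ^ 2 = 2 * π * (‖x‖ ^ 2 + ρ ^ 2) := by
  have e : ∀ θ, ‖x + polar ρ θ‖ ^ 2
      = (‖x‖ ^ 2 + ρ ^ 2) + (2 * ρ * x 0 * Real.cos θ + 2 * ρ * x 1 * Real.sin θ) := by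
    intro θ
    rw [EuclideanSpace.norm_sq_eq, EuclideanSpace.norm_sq_eq, Fin.sum_univ_two, Fin.sum_univ_two,
      PiLp.add_apply, PiLp.add_apply, polar_apply_zero, polar_apply_one]
    simp only [Real.norm_eq_abs, sq_abs]
    linear_combination ρ ^ 2 * Real.sin_sq_add_cos_sq θ
  simp_rw [e]
  rw [intervalIntegral.integral_add, intervalIntegral.integral_add]
  · simp; ring
  all_goals exact Continuous.intervalIntegrable (by fun_prop) _ _

/-- The circular mean of the potential, by Fubini and the mean value formula for `log`. -/
lemma integral_patchConv_circle {D : Set R2} (hD : IsOpen D) (hb : IsBounded D)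
    (hf : volume (frontier D) = 0) {ρ : ℝ} (hρ : 0 < ρ) (x : R2) :
    IntegrableOn (fun y => (1 / (2 * π)) * (Real.log ρ + Real.posLog (ρ⁻¹ * ‖x - y‖))) D ∧
    (2 * π)⁻¹ * ∫ θ in (0)..(2 * π), patchConv D (x + polar ρ θ)
      = ∫ y in D, (1 / (2 * π)) * (Real.log ρ + Real.posLog (ρ⁻¹ * ‖x - y‖)) := by
  have hpi : (0 : ℝ) ≤ 2 * π := by positivity
  have hmeas : Measurable (Function.uncurry fun (θ : ℝ) (y : R2) => nker (x + polar ρ θ - y)) := by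
    apply measurable_nker.comp
    exact (measurable_const.add ((continuous_polar ρ).measurable.comp measurable_fst)).sub
      measurable_snd
  have h_integral : Integrable (Function.uncurry fun (θ : ℝ) (y : R2) => nker (x + polar ρ θ - y))
      ((volume.restrict (Ioc 0 (2 * π))).prod (volume.restrict D)) := by
    rw [integrable_prod_iff hmeas.aestronglyMeasurable]
    constructor
    · refine Eventually.of_forall fun θ => ?_
      change IntegrableOn (fun y => nker (x + polar ρ θ - y)) D
      exact integrableOn_comp_sub hD hb integrableOn_nker (x + polar ρ θ)
    · have hc : Continuous fun z => ∫ y in D, ‖nker (z - y)‖ :=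
        continuous_conv (k := fun u => ‖nker u‖) hD hb hf measurable_nker.norm
          fun L => (integrableOn_nker L).norm
      have hc2 : Continuous fun θ => ∫ y in D, ‖nker (x + polar ρ θ - y)‖ :=
        hc.comp (continuous_const.add (continuous_polar ρ))
      have h1 := (hc2.intervalIntegrable (μ := volume) 0 (2 * π)).1
      exact h1
  have e : ∀ y, (2 * π)⁻¹ * ∫ θ in Ioc 0 (2 * π), nker (x + polar ρ θ - y)
      = (1 / (2 * π)) * (Real.log ρ + Real.posLog (ρ⁻¹ * ‖x - y‖)) := by
    intro y
    rw [← intervalIntegral.integral_of_le hpi, integral_nker_circle hρ]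
  constructor
  · refine Integrable.congr (h_integral.integral_prod_right.const_mul (2 * π)⁻¹) ?_
    exact Eventually.of_forall fun y => e y
  · simp_rw [← e]
    rw [intervalIntegral.integral_of_le hpi, integral_const_mul]
    congr 1
    exact integral_integral_swap h_integral

/-- Strict sub-mean value property: as `ΔΨ = 1 - 2Ω > 0` in `D`, the mean of `Ψ` over a small
circle in `D` exceeds the value at its centre. The gain is bounded below by the part of the patch
within distance `ρ / 2` of the centre, whence the numerical restriction on `Ω`. -/
lemma streamFun_lt_circle {D : Set R2} (hD : IsOpen D) (hb : IsBounded D)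
    (hf : volume (frontier D) = 0) {Ω : ℝ} (hΩ : Ω < 1 / 8) {ρ : ℝ} (hρ : 0 < ρ)
    {x : R2} (hx : Metric.ball x ρ ⊆ D) :
    streamFun D Ω x < (2 * π)⁻¹ * ∫ θ in (0)..(2 * π), streamFun D Ω (x + polar ρ θ) := by
  obtain ⟨hi, he⟩ := integral_patchConv_circle hD hb hf hρ x
  have hcp : Continuous fun θ => patchConv D (x + polar ρ θ) :=
    (continuous_patchConv hD hb hf).comp (continuous_const.add (continuous_polar ρ))
  have hcn : Continuous fun θ => Ω / 2 * ‖x + polar ρ θ‖ ^ 2 := by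
    have := continuous_polar ρ
    fun_prop
  have e1 : (2 * π)⁻¹ * ∫ θ in (0)..(2 * π), streamFun D Ω (x + polar ρ θ)
      = (∫ y in D, (1 / (2 * π)) * (Real.log ρ + Real.posLog (ρ⁻¹ * ‖x - y‖)))
        - Ω / 2 * (‖x‖ ^ 2 + ρ ^ 2) := by
    unfold streamFun
    rw [intervalIntegral.integral_sub (hcp.intervalIntegrable _ _) (hcn.intervalIntegrable _ _),
      mul_sub, he, intervalIntegral.integral_const_mul, integral_sq_norm_circle]
    field_simp
  have hsub : Metric.ball x (ρ / 2) ⊆ D := (Metric.ball_subset_ball (by linarith)).trans hx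
  have hvol : (volume.restrict D).real (Metric.ball x (ρ / 2)) = π * ρ ^ 2 / 4 := by
    rw [measureReal_restrict_apply measurableSet_ball, inter_eq_left.2 hsub, Measure.real,
      EuclideanSpace.volume_ball_fin_two]
    rw [ENNReal.toReal_mul, ENNReal.toReal_pow, ENNReal.toReal_ofReal (by positivity),
      ENNReal.toReal_ofReal pi_pos.le]
    ring
  have hi2 : IntegrableOn (fun y => nker (x - y)) D := integrableOn_comp_sub hD hb integrableOn_nker x
  have hi3 : Integrable ((Metric.ball x (ρ / 2)).indicator fun _ => (1 / (2 * π)) * Real.log 2)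
      (volume.restrict D) := by
    apply IntegrableOn.integrable_indicator _ measurableSet_ball
    have : IsFiniteMeasure ((volume.restrict D).restrict (Metric.ball x (ρ / 2))) :=
      ⟨by
        rw [Measure.restrict_apply_univ]
        exact (Measure.restrict_apply_le _ _).trans_lt measure_ball_lt_top⟩
    exact integrable_const _
  have hae : ∀ᵐ y ∂(volume.restrict D), y ≠ x := by
    apply ae_restrict_of_ae
    rw [ae_iff]; simp
  have hle : (∫ y in D, (nker (x - y) +
      (Metric.ball x (ρ / 2)).indicator (fun _ => (1 / (2 * π)) * Real.log 2) y))
      ≤ ∫ y in D, (1 / (2 * π)) * (Real.log ρ + Real.posLog (ρ⁻¹ * ‖x - y‖)) := by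
    apply integral_mono_ae (hi2.add hi3) hi
    filter_upwards [hae] with y hy
    have hn : 0 < ‖x - y‖ := norm_pos_iff.2 (sub_ne_zero.2 hy.symm)
    by_cases hyb : y ∈ Metric.ball x (ρ / 2)
    · simp only [Pi.add_apply, indicator_of_mem hyb, nker]
      rw [← mul_add]
      refine mul_le_mul_of_nonneg_left ?_ (by positivity)
      have h1 : ‖x - y‖ < ρ / 2 := by
        rw [Metric.mem_ball, dist_comm, dist_eq_norm] at hyb; exact hyb
      rw [← Real.log_mul hn.ne' two_ne_zero]
      have h2 : Real.log (‖x - y‖ * 2) ≤ Real.log ρ := Real.log_le_log (by positivity) (by linarith)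
      linarith [Real.posLog_nonneg (x := ρ⁻¹ * ‖x - y‖)]
    · simp only [Pi.add_apply, indicator_of_notMem hyb, nker, add_zero]
      refine mul_le_mul_of_nonneg_left ?_ (by positivity)
      have h2 : Real.log (ρ⁻¹ * ‖x - y‖) ≤ Real.posLog (ρ⁻¹ * ‖x - y‖) := by
        rw [Real.posLog_def]; exact le_max_right _ _
      rw [Real.log_mul (by positivity) hn.ne', Real.log_inv] at h2
      linarith
  rw [integral_add hi2 hi3, integral_indicator_const _ measurableSet_ball, hvol] at hle
  rw [e1]
  unfold streamFun patchConv
  have h3 : π * ρ ^ 2 / 4 * (1 / (2 * π) * Real.log 2) = ρ ^ 2 * Real.log 2 / 8 := by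
    field_simp; ring
  rw [smul_eq_mul, h3] at hle
  have h4 : ρ ^ 2 * Ω < ρ ^ 2 * (1 / 8) := by gcongr
  have h5 : ρ ^ 2 * (1 / 2) ≤ ρ ^ 2 * Real.log 2 := by
    gcongr
    linarith [Real.log_two_gt_d9]
  nlinarith

/-- Maximum principle: `Ψ` is at most its boundary value throughout `closure D`. -/
lemma streamFun_le {D : Set R2} (hD : IsOpen D) (hb : IsBounded D)
    (hf : volume (frontier D) = 0) {Ω : ℝ} (hΩ : Ω < 1 / 8) {c : ℝ}
    (hc : ∀ x ∈ frontier D, streamFun D Ω x = c) {x : R2} (hx : x ∈ closure D) :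
    streamFun D Ω x ≤ c := by
  have hcont := continuous_streamFun hD hb hf Ω
  have hcomp : IsCompact (closure D) := hb.isCompact_closure
  obtain ⟨x₀, hx₀, hmax⟩ := hcomp.exists_isMaxOn ⟨x, hx⟩ hcont.continuousOn
  refine (hmax hx).trans ?_
  by_cases h : x₀ ∈ D
  · exfalso
    obtain ⟨ε, hε, hball⟩ := Metric.isOpen_iff.1 hD x₀ h
    have hlt := streamFun_lt_circle hD hb hf hΩ (half_pos hε)
      ((Metric.ball_subset_ball (by linarith)).trans hball)
    have hle : ∫ θ in (0)..(2 * π), streamFun D Ω (x₀ + polar (ε / 2) θ)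
        ≤ ∫ θ in (0)..(2 * π), streamFun D Ω x₀ := by
      apply intervalIntegral.integral_mono_on (by positivity)
      · exact (hcont.comp (continuous_const.add (continuous_polar _))).intervalIntegrable _ _
      · exact intervalIntegrable_const
      · intro θ _
        apply hmax
        apply subset_closure
        apply hball
        simp [norm_polar (half_pos hε).le, hε]
    rw [intervalIntegral.integral_const, sub_zero, smul_eq_mul] at hle
    have h2 : (2 * π)⁻¹ * ∫ θ in (0)..(2 * π), streamFun D Ω (x₀ + polar (ε / 2) θ)
        ≤ (2 * π)⁻¹ * (2 * π * streamFun D Ω x₀) := by gcongr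
    rw [inv_mul_cancel_left₀ (by positivity)] at h2
    linarith
  · exact (hc x₀ ⟨hx₀, by rwa [hD.interior_eq]⟩).le

/-! ### Reflections and the mirror comparison -/

/-- Reflection of the plane in the line `⟨e, y⟩ = l` (for a unit vector `e`). -/
def mirror (e : R2) (l : ℝ) (y : R2) : R2 := y - (2 * (inner ℝ e y - l)) • e

/-- The open half-plane `⟨e, y⟩ > l`. -/
def half (e : R2) (l : ℝ) : Set R2 := {y | l < inner ℝ e y}

/-- The real-valued indicator function of `D`. -/
def ind (D : Set R2) (y : R2) : ℝ := D.indicator (fun _ => (1 : ℝ)) y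

/-- The increment `W(v) - W(u)` of the radial kernel `W(z) = N(z) - Ω / (2π) |z|²`. -/
def kerDiff (Ω : ℝ) (u v : R2) : ℝ := nker v - nker u - Ω / (2 * π) * (‖v‖ ^ 2 - ‖u‖ ^ 2)

lemma isOpen_half (e : R2) (l : ℝ) : IsOpen (half e l) :=
  isOpen_lt continuous_const (by fun_prop)

lemma inner_mirror {e : R2} (he : ‖e‖ = 1) (l : ℝ) (y : R2) :
    inner ℝ e (mirror e l y) = 2 * l - inner ℝ e y := by
  rw [mirror, inner_sub_right, inner_smul_right, real_inner_self_eq_norm_sq, he]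
  ring

lemma mirror_mirror {e : R2} (he : ‖e‖ = 1) (l : ℝ) (y : R2) : mirror e l (mirror e l y) = y := by
  rw [mirror, inner_mirror he, mirror, sub_sub, ← add_smul]
  rw [show 2 * (inner ℝ e y - l) + 2 * (2 * l - inner ℝ e y - l) = 0 by ring]
  simp

lemma mirror_eq {e : R2} (he : ‖e‖ = 1) (l : ℝ) :
    mirror e l = fun y => ((ℝ ∙ e)ᗮ.reflection y) + (2 * l) • e := by
  ext1 y
  rw [Submodule.reflection_orthogonal_apply, Submodule.reflection_singleton_apply, mirror, he]
  simp only [RCLike.ofReal_real_eq_id, id, one_pow, div_one]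
  module

lemma norm_mirror_sub_mirror {e : R2} (he : ‖e‖ = 1) (l : ℝ) (x y : R2) :
    ‖mirror e l x - mirror e l y‖ = ‖x - y‖ := by
  rw [mirror_eq he, add_sub_add_right_eq_sub, ← map_sub, LinearIsometryEquiv.norm_map]

lemma norm_mirror_sub {e : R2} (he : ‖e‖ = 1) (l : ℝ) (x y : R2) :
    ‖mirror e l x - y‖ = ‖x - mirror e l y‖ := by
  rw [← norm_mirror_sub_mirror he l, mirror_mirror he]

lemma continuous_mirror (e : R2) (l : ℝ) : Continuous (mirror e l) := by
  unfold mirror; fun_prop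

lemma continuous_mirror₂ (e : R2) : Continuous fun p : ℝ × R2 => mirror e p.1 p.2 := by
  unfold mirror; fun_prop

lemma measurePreserving_mirror {e : R2} (he : ‖e‖ = 1) (l : ℝ) :
    MeasurePreserving (mirror e l) := by
  rw [mirror_eq he]
  exact (measurePreserving_add_right volume ((2 * l) • e)).comp
    ((ℝ ∙ e)ᗮ.reflection).measurePreserving

lemma measurableEmbedding_mirror {e : R2} (he : ‖e‖ = 1) (l : ℝ) :
    MeasurableEmbedding (mirror e l) :=
  (Homeomorph.mk (Function.Involutive.toPerm (mirror e l) (mirror_mirror he l))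
    (continuous_mirror e l) (continuous_mirror e l)).measurableEmbedding

lemma sq_norm_sub_mirror {e : R2} (he : ‖e‖ = 1) (l : ℝ) (x y : R2) :
    ‖mirror e l x - y‖ ^ 2 - ‖x - y‖ ^ 2
      = 4 * (inner ℝ e x - l) * (inner ℝ e y - l) := by
  have h : mirror e l x - y = (x - y) - (2 * (inner ℝ e x - l)) • e := by rw [mirror]; abel
  rw [h, norm_sub_sq_real, norm_smul, he, inner_smul_right, real_inner_comm e (x - y), inner_sub_right,
    mul_one, Real.norm_eq_abs, sq_abs]
  ring

lemma volume_line {e : R2} (he : ‖e‖ = 1) (l : ℝ) : volume {y : R2 | inner ℝ e y = l} = 0 := by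
  have h := Measure.addHaar_submodule (volume : Measure R2) (ℝ ∙ e)ᗮ (by
    intro h
    have h1 : e ∈ (ℝ ∙ e)ᗮ := by rw [h]; trivial
    rw [Submodule.mem_orthogonal_singleton_iff_inner_right, real_inner_self_eq_norm_sq, he] at h1
    norm_num at h1)
  rw [← measure_preimage_add_right volume (-(l • e))] at h
  convert h using 2
  ext y
  simp only [mem_ofPred_eq, mem_preimage, SetLike.mem_coe,
    Submodule.mem_orthogonal_singleton_iff_inner_right, inner_add_right, inner_neg_right, inner_smul_right,
    real_inner_self_eq_norm_sq, he]
  constructor <;> intro h <;> linarith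

/-- Folding an integral over `D` along a line, for an integrand odd under the reflection. -/
lemma integral_odd {D : Set R2} (hD : IsOpen D) {e : R2} (he : ‖e‖ = 1) (l : ℝ) {φ : R2 → ℝ}
    (hφ : IntegrableOn φ D) (hodd : ∀ y, φ (mirror e l y) = -φ y) :
    ∫ y in D, φ y = ∫ y in half e l, (ind D y - ind D (mirror e l y)) * φ y := by
  have hF : Integrable (fun y => ind D y * φ y) := by
    refine (hφ.integrable_indicator hD.measurableSet).congr (Eventually.of_forall fun y => ?_)
    by_cases h : y ∈ D <;> simp [ind, h]
  have hF2 : Integrable (fun y => ind D (mirror e l y) * φ (mirror e l y)) :=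
    (measurePreserving_mirror he l).integrable_comp_of_integrable hF
  have h0 : ∫ y in D, φ y = ∫ y, ind D y * φ y := by
    rw [← integral_indicator hD.measurableSet]
    congr 1; ext y
    by_cases h : y ∈ D <;> simp [ind, h]
  have h1 : ∫ y in (half e l)ᶜ, ind D y * φ y
      = ∫ y in half e l, ind D (mirror e l y) * φ (mirror e l y) := by
    rw [← (measurePreserving_mirror he l).setIntegral_preimage_emb
      (measurableEmbedding_mirror he l) (fun y => ind D y * φ y)]
    apply setIntegral_congr_set
    have : ∀ᵐ y : R2, inner ℝ e y ≠ l := by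
      rw [ae_iff]; simpa using volume_line he l
    filter_upwards [this] with y hy
    have : (y ∈ mirror e l ⁻¹' (half e l)ᶜ) = (y ∈ half e l) := by
      simp only [mem_preimage, mem_compl_iff, half, mem_ofPred_eq, inner_mirror he, not_lt, eq_iff_iff]
      constructor
      · intro h; exact lt_of_le_of_ne (by linarith) hy.symm
      · intro h; linarith
    exact this
  rw [h0, ← integral_add_compl (isOpen_half e l).measurableSet hF, h1,
    ← integral_add hF.integrableOn hF2.integrableOn]
  congr 1; ext y
  rw [hodd]; ring

lemma integrableOn_of_continuous {D : Set R2} (hb : IsBounded D) {f : R2 → ℝ}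
    (hf : Continuous f) : IntegrableOn f D :=
  (hf.continuousOn.integrableOn_compact hb.isCompact_closure).mono_set subset_closure

/-- The comparison of `Ψ` at two mirror points. Completing `N` to the kernel
`W = N - Ω / (2π) |·|²` absorbs the centrifugal term up to a multiple of the first moment. -/
lemma streamFun_sub_mirror {D : Set R2} (hD : IsOpen D) (hb : IsBounded D)
    (hvol : volume D = ENNReal.ofReal π) {e : R2} (he : ‖e‖ = 1) (l Ω : ℝ) (x : R2) :
    streamFun D Ω x - streamFun D Ω (mirror e l x)
      = (∫ y in half e l, (ind D (mirror e l y) - ind D y)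
          * kerDiff Ω (x - y) (mirror e l x - y))
        - 2 * Ω * (inner ℝ e x - l) * (∫ y in D, inner ℝ e y) / π := by
  have hi1 := integrableOn_comp_sub hD hb integrableOn_nker x
  have hi2 := integrableOn_comp_sub hD hb integrableOn_nker (mirror e l x)
  have hi3 : IntegrableOn (fun y => Ω / (2 * π) *
      (‖mirror e l x - y‖ ^ 2 - ‖x - y‖ ^ 2)) D :=
    integrableOn_of_continuous hb (by fun_prop)
  have hi4 : IntegrableOn (fun y : R2 => inner ℝ e y) D :=
    integrableOn_of_continuous hb (by fun_prop)
  have hreal : volume.real D = π := by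
    rw [Measure.real, hvol, ENNReal.toReal_ofReal pi_pos.le]
  have hfold := integral_odd hD he l (φ := fun y => kerDiff Ω (x - y) (mirror e l x - y))
    ((hi2.sub hi1).sub hi3) (by
      intro y
      unfold kerDiff nker
      rw [norm_mirror_sub_mirror he, ← norm_mirror_sub he]
      ring)
  have hneg : (∫ y in half e l, (ind D (mirror e l y) - ind D y)
      * kerDiff Ω (x - y) (mirror e l x - y))
      = -∫ y in half e l, (ind D y - ind D (mirror e l y))
      * kerDiff Ω (x - y) (mirror e l x - y) := by
    rw [← integral_neg]; congr 1; ext y; ring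
  rw [hneg, ← hfold]
  have hk : ∫ y in D, kerDiff Ω (x - y) (mirror e l x - y)
      = patchConv D (mirror e l x) - patchConv D x
        - Ω / (2 * π) * (4 * (inner ℝ e x - l) * ((∫ y in D, inner ℝ e y) - l * π)) := by
    unfold kerDiff patchConv
    have hs := integral_sub (hi2.sub hi1) hi3
    simp only [Pi.sub_apply] at hs
    rw [hs, integral_sub hi2 hi1]
    congr 1
    rw [integral_const_mul]
    congr 1
    simp_rw [sq_norm_sub_mirror he]
    rw [integral_const_mul, integral_sub hi4 (integrableOn_of_continuous hb continuous_const),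
      setIntegral_const, hreal]
    simp only [smul_eq_mul]; ring
  have hsq := sq_norm_sub_mirror he l x 0
  simp only [sub_zero, inner_zero_right, zero_sub] at hsq
  rw [hk]
  unfold streamFun
  have : ‖x‖ ^ 2 = ‖mirror e l x‖ ^ 2 + 4 * (inner ℝ e x - l) * l := by linarith
  rw [this]
  field_simp
  ring

/-! ### Monotonicity of the modified kernel -/

/-- The radial kernel `W` is strictly increasing in the disk `2Ω|z|² < 1`. -/
lemma kerDiff_pos {Ω : ℝ} (hΩ : 0 < Ω) {u v : R2} (hu : 0 < ‖u‖) (huv : ‖u‖ < ‖v‖)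
    (hv : 2 * Ω * ‖v‖ ^ 2 < 1) : 0 < kerDiff Ω u v := by
  have hv0 : 0 < ‖v‖ := hu.trans huv
  have e : kerDiff Ω u v
      = 1 / (2 * π) * (Real.log (‖v‖ / ‖u‖) - Ω * (‖v‖ ^ 2 - ‖u‖ ^ 2)) := by
    rw [Real.log_div hv0.ne' hu.ne']
    unfold kerDiff nker
    field_simp
  rw [e]
  have h1 := Real.one_sub_inv_le_log_of_pos (div_pos hv0 hu)
  rw [inv_div] at h1
  have h2 : Ω * (‖v‖ ^ 2 - ‖u‖ ^ 2) < 1 - ‖u‖ / ‖v‖ := by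
    have : 1 - ‖u‖ / ‖v‖ = (‖v‖ - ‖u‖) / ‖v‖ := by field_simp
    rw [this, lt_div_iff₀ hv0]
    have h3 : Ω * ((‖v‖ + ‖u‖) * ‖v‖) < 1 := by nlinarith
    nlinarith
  have : 0 < Real.log (‖v‖ / ‖u‖) - Ω * (‖v‖ ^ 2 - ‖u‖ ^ 2) := by linarith
  positivity

lemma kerDiff_le {Ω : ℝ} (hΩ : 0 < Ω) {u v : R2} (hu : 0 < ‖u‖) (huv : ‖u‖ < ‖v‖) :
    kerDiff Ω u v ≤ (‖v‖ - ‖u‖) * ‖u‖⁻¹ := by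
  have hv0 : 0 < ‖v‖ := hu.trans huv
  have e : kerDiff Ω u v
      = 1 / (2 * π) * (Real.log (‖v‖ / ‖u‖) - Ω * (‖v‖ ^ 2 - ‖u‖ ^ 2)) := by
    rw [Real.log_div hv0.ne' hu.ne']
    unfold kerDiff nker
    field_simp
  have h1 := Real.log_le_sub_one_of_pos (div_pos hv0 hu)
  have h2 : ‖v‖ / ‖u‖ - 1 = (‖v‖ - ‖u‖) * ‖u‖⁻¹ := by field_simp
  have h3 : 0 ≤ Ω * (‖v‖ ^ 2 - ‖u‖ ^ 2) := by
    apply mul_nonneg hΩ.le; nlinarith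
  have h4 : 0 ≤ (‖v‖ - ‖u‖) * ‖u‖⁻¹ := mul_nonneg (by linarith) (by positivity)
  have h5 : 1 / (2 * π) ≤ 1 := by
    rw [div_le_one (by positivity)]; linarith [pi_gt_three]
  rw [e]
  calc 1 / (2 * π) * (Real.log (‖v‖ / ‖u‖) - Ω * (‖v‖ ^ 2 - ‖u‖ ^ 2))
      ≤ 1 / (2 * π) * ((‖v‖ - ‖u‖) * ‖u‖⁻¹) := by gcongr; linarith
    _ ≤ 1 * ((‖v‖ - ‖u‖) * ‖u‖⁻¹) := by gcongr
    _ = _ := one_mul _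

/-- The limit is `-2 ∂_e W(u)`. -/
lemma tendsto_kerDiff {e : R2} (he : ‖e‖ = 1) (Ω : ℝ) {u : R2} (hu : u ≠ 0) {t : ℕ → ℝ}
    (ht0 : ∀ n, t n ≠ 0) (ht : Tendsto t atTop (𝓝 0)) :
    Tendsto (fun n => kerDiff Ω u (u - (2 * t n) • e) / t n) atTop
      (𝓝 (-(inner ℝ e u / π) * (1 / ‖u‖ ^ 2 - 2 * Ω))) := by
  have hn : 0 < ‖u‖ := norm_pos_iff.2 hu
  set a := inner ℝ e u with ha
  have hsq : ∀ s : ℝ, ‖u - (2 * s) • e‖ ^ 2 = ‖u‖ ^ 2 - 4 * s * a + 4 * s ^ 2 := by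
    intro s
    rw [norm_sub_sq_real, inner_smul_right, real_inner_comm, norm_smul, he, mul_one,
      Real.norm_eq_abs, sq_abs]
    ring
  let f : ℝ → ℝ := fun s => 1 / (2 * π) * (Real.log (‖u‖ ^ 2 - 4 * s * a + 4 * s ^ 2) / 2
    - Ω * (‖u‖ ^ 2 - 4 * s * a + 4 * s ^ 2))
  have hq : HasDerivAt (fun s : ℝ => ‖u‖ ^ 2 - 4 * s * a + 4 * s ^ 2) (-(4 * a)) 0 := by
    have := (((hasDerivAt_id (0 : ℝ)).const_mul 4).mul_const a).const_sub (‖u‖ ^ 2)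
    have := this.add (((hasDerivAt_id (0 : ℝ)).pow 2).const_mul 4)
    exact this.congr_deriv (by simp)
  have hf : HasDerivAt f (1 / (2 * π) * (-(4 * a) / ‖u‖ ^ 2 / 2 - Ω * (-(4 * a)))) 0 := by
    have hl := hq.log (by simp [hu])
    have := ((hl.div_const 2).sub (hq.const_mul Ω)).const_mul (1 / (2 * π))
    exact this.congr_deriv (by simp)
  have hk : ∀ s, kerDiff Ω u (u - (2 * s) • e) = f s - f 0 := by
    intro s
    have hlog : ∀ v : R2, Real.log ‖v‖ = Real.log (‖v‖ ^ 2) / 2 := by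
      intro v; rw [Real.log_pow]; push_cast; ring
    simp only [f, kerDiff, nker]
    rw [hlog u, hlog, hsq]
    simp only [mul_zero, zero_mul, sub_zero, ne_eq, OfNat.ofNat_ne_zero, not_false_eq_true, zero_pow,
      add_zero]
    field_simp
    ring
  have hs := hf.tendsto_slope.comp (tendsto_nhdsWithin_iff.2
    ⟨ht, Eventually.of_forall fun n => ht0 n⟩)
  convert hs using 1
  · ext n
    simp only [Function.comp, hk, slope_def_field, sub_zero]
  · congr 1
    field_simp
    ring

/-! ### Symmetry at the critical position -/

lemma kerDiff_odd {e : R2} (he : ‖e‖ = 1) (l Ω : ℝ) (x y : R2) :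
    kerDiff Ω (x - mirror e l y) (mirror e l x - mirror e l y)
      = -kerDiff Ω (x - y) (mirror e l x - y) := by
  unfold kerDiff nker
  rw [norm_mirror_sub_mirror he, ← norm_mirror_sub he]
  ring

lemma integrableOn_kerDiff {D : Set R2} (hD : IsOpen D) (hb : IsBounded D) (Ω : ℝ) (x z : R2) :
    IntegrableOn (fun y => kerDiff Ω (x - y) (z - y)) D := by
  have hi1 := integrableOn_comp_sub hD hb integrableOn_nker x
  have hi2 := integrableOn_comp_sub hD hb integrableOn_nker z
  have hi3 : IntegrableOn (fun y => Ω / (2 * π) * (‖z - y‖ ^ 2 - ‖x - y‖ ^ 2)) D :=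
    integrableOn_of_continuous hb (by fun_prop)
  exact (hi2.sub hi1).sub hi3

lemma integrable_odd {D : Set R2} (hD : IsOpen D) {e : R2} (he : ‖e‖ = 1) (l : ℝ) {φ : R2 → ℝ}
    (hφ : IntegrableOn φ D) (hodd : ∀ y, φ (mirror e l y) = -φ y) :
    Integrable fun y => (ind D (mirror e l y) - ind D y) * φ y := by
  have hF : Integrable (fun y => ind D y * φ y) := by
    refine (hφ.integrable_indicator hD.measurableSet).congr (Eventually.of_forall fun y => ?_)
    by_cases h : y ∈ D <;> simp [ind, h]
  have hF2 : Integrable (fun y => ind D (mirror e l y) * φ (mirror e l y)) :=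
    (measurePreserving_mirror he l).integrable_comp_of_integrable hF
  refine (hF.add hF2).neg.congr (Eventually.of_forall fun y => ?_)
  simp only [Pi.neg_apply, Pi.add_apply, hodd]
  ring

/-- For `x` and `y` beyond the mirror line, `y` is closer to `x` than to the mirror image of `x`, and the
relevant distances do not exceed `2R`. -/
lemma mirror_bounds {D : Set R2} {R : ℝ} (hR : D ⊆ Metric.closedBall 0 R) {e : R2}
    (he : ‖e‖ = 1) {l : ℝ} {x y : R2} (hx : ‖x‖ ≤ R) (hmx : ‖mirror e l x‖ ≤ R)
    (hlx : l < inner ℝ e x) (hy : y ∈ half e l) (hxy : x - y ≠ 0)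
    (hyD : y ∈ D ∨ mirror e l y ∈ D) :
    0 < ‖x - y‖ ∧ ‖x - y‖ < ‖mirror e l x - y‖ ∧ ‖mirror e l x - y‖ ≤ 2 * R := by
  refine ⟨norm_pos_iff.2 hxy, ?_, ?_⟩
  · have h := sq_norm_sub_mirror he l x y
    have h2 : 0 < 4 * (inner ℝ e x - l) * (inner ℝ e y - l) := by
      have h3 : l < inner ℝ e y := hy
      have := mul_pos (sub_pos.2 hlx) (sub_pos.2 h3)
      nlinarith
    exact lt_of_pow_lt_pow_left₀ 2 (norm_nonneg _) (by linarith)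
  · rcases hyD with h | h
    · have := hR h
      rw [mem_closedBall_zero_iff] at this
      linarith [norm_sub_le (mirror e l x) y]
    · have := hR h
      rw [mem_closedBall_zero_iff] at this
      rw [norm_mirror_sub he]
      linarith [norm_sub_le x (mirror e l y)]

lemma abs_ind_sub_le (D : Set R2) (y z : R2) : |ind D y - ind D z| ≤ 1 := by
  by_cases h : y ∈ D <;> by_cases h' : z ∈ D <;> simp [ind, h, h']

lemma ind_sub_ne_zero {D : Set R2} {y z : R2} (h : ind D z - ind D y ≠ 0) : y ∈ D ∨ z ∈ D := by
  by_contra! h'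
  exact h (by simp [ind, h'.1, h'.2])

/-- A touching point off the mirror line forces mirror symmetry. -/
lemma symmetry_of_touching {D : Set R2} (hD : IsOpen D) (hb : IsBounded D)
    (hvol : volume D = ENNReal.ofReal π) {Ω R : ℝ} (hΩ : 0 < Ω)
    (hR : D ⊆ Metric.closedBall 0 R) (hΩR : 2 * Ω * (2 * R) ^ 2 < 1) {e : R2} (he : ‖e‖ = 1)
    (hmo : ∫ y in D, inner ℝ e y ≤ 0) {l : ℝ}
    (hsym : ∀ᵐ y : R2, y ∈ half e l → ind D y ≤ ind D (mirror e l y))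
    {x : R2} (hx : ‖x‖ ≤ R) (hmx : ‖mirror e l x‖ ≤ R) (hlx : l < inner ℝ e x)
    (hψ : streamFun D Ω x ≤ streamFun D Ω (mirror e l x)) :
    ∫ y in D, inner ℝ e y = 0 ∧
      ∀ᵐ y : R2, y ∈ half e l → ind D (mirror e l y) = ind D y := by
  have hcomp := streamFun_sub_mirror hD hb hvol he l Ω x
  set mo := ∫ y in D, inner ℝ e y
  set G : R2 → ℝ := fun y => (ind D (mirror e l y) - ind D y)
          * kerDiff Ω (x - y) (mirror e l x - y)
  have hGi : IntegrableOn G (half e l) :=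
    (integrable_odd hD he l (integrableOn_kerDiff hD hb Ω x (mirror e l x))
      (kerDiff_odd he l Ω x)).integrableOn
  have hne : ∀ᵐ y : R2, y ≠ x := by
    rw [ae_iff]; simp
  have hpos : ∀ y, y ∈ half e l → y ≠ x → ind D (mirror e l y) - ind D y ≠ 0 →
      0 < kerDiff Ω (x - y) (mirror e l x - y) := by
    intro y hy hyx h
    obtain ⟨h1, h2, h3⟩ := mirror_bounds hR he hx hmx hlx hy (sub_ne_zero.2 hyx.symm)
      (ind_sub_ne_zero h)
    refine kerDiff_pos hΩ h1 h2 (lt_of_le_of_lt ?_ hΩR)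
    gcongr
  have hG0 : 0 ≤ᵐ[volume.restrict (half e l)] G := by
    filter_upwards [ae_restrict_mem (isOpen_half e l).measurableSet, ae_restrict_of_ae hsym,
      ae_restrict_of_ae hne] with y hy hs hyx
    by_cases h : ind D (mirror e l y) - ind D y = 0
    · simp [G, h]
    · exact mul_nonneg (sub_nonneg.2 (hs hy)) (hpos y hy hyx h).le
  have h_integral : 0 ≤ ∫ y in half e l, G y := integral_nonneg_of_ae hG0
  have hc : 0 < 2 * Ω * (inner ℝ e x - l) := by
    have := sub_pos.2 hlx; positivity
  have hle : 2 * Ω * (inner ℝ e x - l) * mo / π ≤ 0 :=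
    div_nonpos_of_nonpos_of_nonneg (mul_nonpos_of_nonneg_of_nonpos hc.le hmo) pi_pos.le
  have hG : ∫ y in half e l, G y = 0 := by linarith
  have hz : 2 * Ω * (inner ℝ e x - l) * mo / π = 0 := by linarith
  refine ⟨?_, ?_⟩
  · rw [div_eq_zero_iff, mul_eq_zero] at hz
    rcases hz with (h | h) | h
    · exact absurd h hc.ne'
    · exact h
    · exact absurd h pi_pos.ne'
  · have h0 := (setIntegral_eq_zero_iff_of_nonneg_ae hG0 hGi).1 hG
    have h0 := (ae_restrict_iff' (isOpen_half e l).measurableSet).1 h0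
    filter_upwards [h0, hne] with y h1 hyx hy
    by_contra h
    have h := sub_ne_zero.2 h
    have h1 := h1 hy
    simp only [G, Pi.zero_apply, mul_eq_zero] at h1
    exact h1.elim h (hpos y hy hyx h).ne'

lemma tendsto_ind {D : Set R2} {w : ℕ → R2} {z : R2} (hw : Tendsto w atTop (𝓝 z))
    (hz : z ∉ frontier D) : Tendsto (fun n => ind D (w n)) atTop (𝓝 (ind D z)) := by
  apply tendsto_const_nhds.congr'
  by_cases h : z ∈ D
  · have hi : z ∈ interior D := by
      by_contra h'; exact hz ⟨subset_closure h, h'⟩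
    filter_upwards [hw (mem_interior_iff_mem_nhds.1 hi)] with n hn
    have hn : w n ∈ D := hn
    simp [ind, h, hn]
  · have hi : z ∉ closure D := fun h' => hz ⟨h', fun h'' => h (interior_subset h'')⟩
    filter_upwards [hw (isClosed_closure.isOpen_compl.mem_nhds hi)] with n hn
    have hn : w n ∉ D := fun h' => hn (subset_closure h')
    simp [ind, h, hn]

lemma tendsto_ind_half {e : R2} {l : ℝ} {m : ℕ → ℝ} {w : ℕ → R2} {z : R2}
    (hw : Tendsto w atTop (𝓝 z)) (hm : Tendsto m atTop (𝓝 l)) (hz : inner ℝ e z ≠ l) :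
    Tendsto (fun n => ind (half e (m n)) (w n)) atTop (𝓝 (ind (half e l) z)) := by
  have hi : Tendsto (fun n => inner ℝ e (w n)) atTop (𝓝 (inner ℝ e z)) :=
    ((by fun_prop : Continuous fun y : R2 => inner ℝ e y).tendsto z).comp hw
  apply tendsto_const_nhds.congr'
  rcases lt_or_gt_of_ne hz with h | h
  · filter_upwards [hi.eventually_lt hm h] with n hn
    simp [ind, half, h.le, hn.le]
  · filter_upwards [hm.eventually_lt hi h] with n hn
    simp [ind, half, h, hn]

lemma measurable_ind {D : Set R2} (hD : IsOpen D) : Measurable (ind D) :=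
  measurable_const.indicator hD.measurableSet

/-- The degenerate case, where the touching points collapse onto the mirror line: the mirror
comparison is divided by the vanishing distance `t n` to the line before passing to the limit. -/
lemma symmetry_of_tangency {D : Set R2} (hD : IsOpen D) (hb : IsBounded D)
    (hf : volume (frontier D) = 0)
    (hvol : volume D = ENNReal.ofReal π) {Ω R : ℝ} (hΩ : 0 < Ω)
    (hR : D ⊆ Metric.closedBall 0 R) (hΩR : 2 * Ω * (2 * R) ^ 2 < 1) {e : R2} (he : ‖e‖ = 1)
    (hmo : ∫ y in D, inner ℝ e y ≤ 0) {l : ℝ}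
    (hsym : ∀ᵐ y : R2, y ∈ half e l → ind D y ≤ ind D (mirror e l y))
    {x : R2} (hlx : inner ℝ e x = l) {w : ℕ → R2} {m : ℕ → ℝ}
    (hw : Tendsto w atTop (𝓝 x)) (hm : Tendsto m atTop (𝓝 l))
    (hwR : ∀ n, ‖w n‖ ≤ R) (hmwR : ∀ n, ‖mirror e (m n) (w n)‖ ≤ R)
    (hmw : ∀ n, m n < inner ℝ e (w n))
    (hψ : ∀ n, streamFun D Ω (w n) ≤ streamFun D Ω (mirror e (m n) (w n))) :
    ∫ y in D, inner ℝ e y = 0 ∧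
      ∀ᵐ y : R2, y ∈ half e l → ind D (mirror e l y) = ind D y := by
  have hcomp := fun n => streamFun_sub_mirror hD hb hvol he (m n) Ω (w n)
  have hR0 : 0 ≤ R := (norm_nonneg _).trans (hwR 0)
  set mo := ∫ y in D, inner ℝ e y
  set t : ℕ → ℝ := fun n => inner ℝ e (w n) - m n with ht
  have ht0 : ∀ n, 0 < t n := fun n => sub_pos.2 (hmw n)
  have htl : Tendsto t atTop (𝓝 0) := by
    have hi : Tendsto (fun n => inner ℝ e (w n)) atTop (𝓝 (inner ℝ e x)) :=
      ((by fun_prop : Continuous fun y : R2 => inner ℝ e y).tendsto x).comp hw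
    have := hi.sub hm
    rwa [hlx, sub_self] at this
  let A : ℕ → R2 → ℝ := fun n u => ind (half e (m n)) (w n - u) *
    (ind D (mirror e (m n) (w n - u)) - ind D (w n - u))
  let F : ℕ → R2 → ℝ := fun n u => A n u * (kerDiff Ω u (u - (2 * t n) • e) / t n)
  let A' : R2 → ℝ := fun u => ind (half e l) (x - u) *
    (ind D (mirror e l (x - u)) - ind D (x - u))
  let F' : R2 → ℝ := fun u => A' u * (-(inner ℝ e u / π) * (1 / ‖u‖ ^ 2 - 2 * Ω))
  let bd : R2 → ℝ := (Metric.closedBall (0 : R2) (2 * R)).indicator fun u => 2 * ‖u‖⁻¹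
  have hbd : Integrable bd :=
    IntegrableOn.integrable_indicator ((integrableOn_inv_norm (2 * R)).const_mul 2)
      measurableSet_closedBall
  have hne : ∀ᵐ u : R2, u ≠ 0 := by
    rw [ae_iff]; simp
  -- the mirror comparison, divided by `t n` and written in the variable `u = w n - y`
  have hFint : ∀ n, ∫ u, F n u ≤ 2 * Ω * mo / π := by
    intro n
    have h1 : ∫ u, F n u = (∫ y in half e (m n), (ind D (mirror e (m n) y) - ind D y)
          * kerDiff Ω (w n - y) (mirror e (m n) (w n) - y)) / t n := by
      rw [← integral_div, ← integral_indicator (isOpen_half e (m n)).measurableSet,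
        ← integral_sub_left_eq_self _ volume (w n)]
      congr 1
      ext u
      have hv : (w n - u) - (2 * t n) • e = mirror e (m n) (w n) - u := by
        rw [mirror]; simp only [t]; abel
      simp only [F, A, hv, sub_sub_cancel]
      by_cases h : u ∈ half e (m n)
      · rw [indicator_of_mem h]
        simp [ind, h, mul_div_assoc]
      · rw [indicator_of_notMem h]
        simp [ind, h]
    rw [h1, div_le_iff₀ (ht0 n)]
    have h2 := hcomp n
    have h3 := hψ n
    have h4 : 2 * Ω * (inner ℝ e (w n) - m n) * mo / π = 2 * Ω * mo / π * t n := by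
      simp only [t]; ring
    rw [h4] at h2
    linarith
  have hFm : ∀ n, AEStronglyMeasurable (F n) := by
    intro n
    have hs : Measurable fun u : R2 => w n - u := by fun_prop
    have h1 : Measurable fun u => ind (half e (m n)) (w n - u) :=
      (measurable_ind (isOpen_half e (m n))).comp hs
    have h2 : Measurable fun u => ind D (w n - u) := (measurable_ind hD).comp hs
    have h3 : Measurable fun u => ind D (mirror e (m n) (w n - u)) :=
      (measurable_ind hD).comp ((continuous_mirror e (m n)).measurable.comp hs)
    have h4 : Measurable fun u : R2 => kerDiff Ω u (u - (2 * t n) • e) := by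
      unfold kerDiff nker; fun_prop
    exact ((h1.mul (h3.sub h2)).mul (h4.div_const _)).aestronglyMeasurable
  have hFb : ∀ n, ∀ᵐ u : R2, ‖F n u‖ ≤ bd u := by
    intro n
    filter_upwards [hne] with u hu
    have hbd0 : 0 ≤ bd u := by
      apply indicator_nonneg; intro u _; positivity
    by_cases hh : w n - u ∈ half e (m n)
    swap
    · simpa [F, A, ind, hh] using hbd0
    by_cases hd : ind D (mirror e (m n) (w n - u)) - ind D (w n - u) = 0
    · simpa [F, A, hd] using hbd0
    have hv : mirror e (m n) (w n) - (w n - u) = u - (2 * t n) • e := by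
      rw [mirror]; simp only [t]; abel
    obtain ⟨h1, h2, h3⟩ := mirror_bounds hR he (hwR n) (hmwR n) (hmw n) hh
      (by rwa [sub_sub_cancel]) (ind_sub_ne_zero hd)
    rw [hv, sub_sub_cancel] at h2
    rw [hv] at h3
    rw [sub_sub_cancel] at h1
    have h4 : 0 < kerDiff Ω u (u - (2 * t n) • e) := by
      refine kerDiff_pos hΩ h1 h2 (lt_of_le_of_lt ?_ hΩR)
      gcongr
    have h5 := kerDiff_le hΩ h1 h2
    have h6 : ‖u - (2 * t n) • e‖ - ‖u‖ ≤ 2 * t n := by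
      have := norm_sub_le u ((2 * t n) • e)
      rw [norm_smul, he, mul_one, Real.norm_eq_abs, abs_of_pos (by linarith [ht0 n])] at this
      linarith
    have h7 : kerDiff Ω u (u - (2 * t n) • e) / t n ≤ 2 * ‖u‖⁻¹ := by
      rw [div_le_iff₀ (ht0 n)]
      calc _ ≤ _ := h5
        _ ≤ 2 * t n * ‖u‖⁻¹ := by gcongr
        _ = _ := by ring
    have hbu : bd u = 2 * ‖u‖⁻¹ := by
      apply indicator_of_mem
      rw [mem_closedBall_zero_iff]; linarith
    have hA : |A n u| ≤ 1 := by
      simpa [A, ind, hh] using abs_ind_sub_le D (mirror e (m n) (w n - u)) (w n - u)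
    rw [hbu, norm_mul, Real.norm_eq_abs, Real.norm_eq_abs, abs_of_pos (div_pos h4 (ht0 n))]
    calc _ ≤ 1 * (2 * ‖u‖⁻¹) := by
          have := (div_pos h4 (ht0 n)).le
          gcongr
      _ = _ := one_mul _
  have hfr : ∀ᵐ y : R2, y ∉ frontier D := by rw [ae_iff]; simpa using hf
  have hline : ∀ᵐ y : R2, inner ℝ e y ≠ l := by rw [ae_iff]; simpa using volume_line he l
  have hfr2 : ∀ᵐ y : R2, mirror e l y ∉ frontier D :=
    (measurePreserving_mirror he l).quasiMeasurePreserving.ae hfr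
  have hqx := (Measure.measurePreserving_sub_left (volume : Measure R2) x).quasiMeasurePreserving
  have hlim : ∀ᵐ u : R2, Tendsto (fun n => F n u) atTop (𝓝 (F' u)) := by
    filter_upwards [hne, hqx.ae hfr, hqx.ae hline, hqx.ae hfr2] with u hu h1 h2 h3
    have hwu : Tendsto (fun n => w n - u) atTop (𝓝 (x - u)) := hw.sub_const u
    refine ((tendsto_ind_half hwu hm h2).mul ((tendsto_ind ?_ h3).sub (tendsto_ind hwu h1))).mul
      (tendsto_kerDiff he Ω hu (fun n => (ht0 n).ne') htl)
    exact ((continuous_mirror₂ e).tendsto (l, x - u)).comp (hm.prodMk_nhds hwu)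
  have hFlim := tendsto_integral_of_dominated_convergence bd hFm hbd hFb hlim
  have hF'i : Integrable F' := by
    refine hbd.mono' (aestronglyMeasurable_of_tendsto_ae atTop hFm hlim) ?_
    filter_upwards [hlim, ae_all_iff.2 hFb] with u h1 h2
    exact le_of_tendsto h1.norm (Eventually.of_forall h2)
  have hF'le : ∫ u, F' u ≤ 2 * Ω * mo / π := le_of_tendsto hFlim (Eventually.of_forall hFint)
  have hfac : ∀ u : R2, u ≠ 0 → x - u ∈ half e l →
      ind D (mirror e l (x - u)) - ind D (x - u) ≠ 0 →
      0 < -(inner ℝ e u / π) * (1 / ‖u‖ ^ 2 - 2 * Ω) := by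
    intro u hu hh hd
    have h1 : inner ℝ e u < 0 := by
      have : l < inner ℝ e (x - u) := hh
      rw [inner_sub_right, hlx] at this
      linarith
    have hmx : mirror e l x = x := by rw [mirror, hlx]; simp
    have hxR : ‖x‖ ≤ R := le_of_tendsto hw.norm (Eventually.of_forall hwR)
    have h2 : ‖u‖ ≤ 2 * R := by
      rcases ind_sub_ne_zero hd with h | h
      · have := hR h
        rw [mem_closedBall_zero_iff] at this
        have h' := norm_sub_le x (x - u)
        rw [sub_sub_cancel] at h'
        linarith
      · have := hR h
        rw [mem_closedBall_zero_iff] at this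
        have h' := norm_sub_le x (mirror e l (x - u))
        rw [← norm_mirror_sub he, hmx, sub_sub_cancel] at h'
        linarith
    have h3 : 0 < ‖u‖ := norm_pos_iff.2 hu
    have h4 : 2 * Ω < 1 / ‖u‖ ^ 2 := by
      rw [lt_div_iff₀ (by positivity)]
      refine lt_of_le_of_lt ?_ hΩR
      gcongr
    have h5 : 0 < -(inner ℝ e u / π) := by
      rw [neg_pos]; exact div_neg_of_neg_of_pos h1 pi_pos
    exact mul_pos h5 (by linarith)
  have hF'0 : 0 ≤ᵐ[volume] F' := by
    filter_upwards [hne, hqx.ae hsym] with u hu hs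
    by_cases hh : x - u ∈ half e l
    swap
    · simp [F', A', ind, hh]
    by_cases hd : ind D (mirror e l (x - u)) - ind D (x - u) = 0
    · simp [F', A', hd]
    have h1 := hfac u hu hh hd
    have h2 : 0 ≤ A' u := by
      have : A' u = ind D (mirror e l (x - u)) - ind D (x - u) := by
        simp [A', ind, hh]
      rw [this]; exact sub_nonneg.2 (hs hh)
    exact mul_nonneg h2 h1.le
  have h_integral : 0 ≤ ∫ u, F' u := integral_nonneg_of_ae hF'0
  have hle : 2 * Ω * mo / π ≤ 0 :=
    div_nonpos_of_nonpos_of_nonneg (mul_nonpos_of_nonneg_of_nonpos (by positivity) hmo) pi_pos.le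
  have hG : ∫ u, F' u = 0 := by linarith
  have hz : 2 * Ω * mo / π = 0 := by linarith
  refine ⟨?_, ?_⟩
  · rw [div_eq_zero_iff, mul_eq_zero] at hz
    rcases hz with (h | h) | h
    · exact absurd h (by positivity)
    · exact h
    · exact absurd h pi_pos.ne'
  · have h0 := (integral_eq_zero_iff_of_nonneg_ae hF'0 hF'i).1 hG
    have h0 : ∀ᵐ u : R2, u ≠ 0 → F' u = 0 := h0.mono fun u hu _ => hu
    have h0 := hqx.ae h0
    have hnx := hqx.ae hne
    filter_upwards [h0, hnx] with y h1 hyx hy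
    by_contra h
    have h := sub_ne_zero.2 h
    have h1 := h1 hyx
    have h2 := hfac (x - y) hyx (by rwa [sub_sub_cancel]) (by rwa [sub_sub_cancel])
    have hA : A' (x - y) = ind D (mirror e l y) - ind D y := by
      simp [A', ind, hy]
    rcases mul_eq_zero.1 h1 with h3 | h3
    · exact h (hA ▸ h3)
    · exact h2.ne' h3

/-! ### Moving planes -/

lemma exists_mem_frontier_of_path {D : Set R2} (hD : IsOpen D) {f : ℝ → R2} (hf : Continuous f)
    {a b : ℝ} (hab : a ≤ b) (ha : f a ∉ D) (hb : f b ∈ closure D) :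
    ∃ s ∈ Icc a b, f s ∈ frontier D := by
  by_cases h : f a ∈ closure D
  · exact ⟨a, left_mem_Icc.2 hab, by rw [hD.frontier_eq]; exact ⟨h, ha⟩⟩
  have hc : IsPreconnected (f '' Icc a b) := isPreconnected_Icc.image f hf.continuousOn
  by_contra! hno
  have hcD : ∀ s ∈ Icc a b, f s ∈ closure D → f s ∈ D := by
    intro s hs h1
    by_contra h2
    exact hno s hs (by rw [hD.frontier_eq]; exact ⟨h1, h2⟩)
  obtain ⟨z, -, hz1, hz2⟩ := hc D (closure D)ᶜ hD isClosed_closure.isOpen_compl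
    (by
      rintro _ ⟨s, hs, rfl⟩
      by_cases h1 : f s ∈ closure D
      · exact Or.inl (hcD s hs h1)
      · exact Or.inr h1)
    ⟨f b, mem_image_of_mem f (right_mem_Icc.2 hab), hcD b (right_mem_Icc.2 hab) hb⟩
    ⟨f a, mem_image_of_mem f (left_mem_Icc.2 hab), h⟩
  exact hz2 (subset_closure hz1)

/-- The cap of `D` beyond the line `⟨e, y⟩ = l` is mirrored into `D`. -/
def CapReflects (D : Set R2) (e : R2) (l : ℝ) : Prop :=
  ∀ y ∈ D, l < inner ℝ e y → mirror e l y ∈ D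

/-- The moving plane argument: if the first moment of `D` in direction `e` is nonpositive, then
it vanishes, and the plane can be moved from infinity all the way to the origin. -/
lemma moving_plane {D : Set R2} (hD : IsOpen D) (hb : IsBounded D)
    (hf : volume (frontier D) = 0)
    (hvol : volume D = ENNReal.ofReal π) {Ω R : ℝ} (hΩ : 0 < Ω) (hΩ' : Ω < 1 / 8)
    (hR : D ⊆ Metric.closedBall 0 R) (hΩR : 2 * Ω * (2 * R) ^ 2 < 1)
    {c : ℝ} (hc : ∀ x ∈ frontier D, streamFun D Ω x = c) {e : R2} (he : ‖e‖ = 1)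
    (hmo : ∫ y in D, inner ℝ e y ≤ 0) :
    ∫ y in D, inner ℝ e y = 0 ∧ ∀ l > 0, CapReflects D e l := by
  have hcl : closure D ⊆ Metric.closedBall 0 R := closure_minimal hR Metric.isClosed_closedBall
  have hne : D.Nonempty := by
    rw [nonempty_iff_ne_empty]; rintro rfl
    simp [pi_pos.not_ge] at hvol
  have hinner : ∀ y ∈ D, |inner ℝ e y| ≤ R := by
    intro y hy
    have h1 := abs_real_inner_le_norm e y
    have h2 := hR hy
    rw [mem_closedBall_zero_iff] at h2
    rw [he, one_mul] at h1
    exact h1.trans h2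
  have hcR : ∀ y ∈ closure D, ‖y‖ ≤ R := fun y hy => mem_closedBall_zero_iff.1 (hcl hy)
  have hcin : Continuous fun y : R2 => inner ℝ e y := by fun_prop
  -- `Λ` is the critical position at which the moving plane stops
  set S : Set ℝ := {l | ∀ m ≥ l, CapReflects D e m} with hS
  have hSne : S.Nonempty := ⟨R, fun m hm y hy hmy => by
    have := (abs_le.1 (hinner y hy)).2
    linarith⟩
  have hSb : BddBelow S := by
    refine ⟨-R, fun l hl => ?_⟩
    by_contra! h
    obtain ⟨y, hy⟩ := hne
    have h1 := (abs_le.1 (hinner y hy)).1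
    have h2 := hl l le_rfl y hy (by linarith)
    have h3 := (abs_le.1 (hinner _ h2)).1
    rw [inner_mirror he] at h3
    linarith
  set Λ := sInf S with hΛ
  have hgt : ∀ m > Λ, CapReflects D e m := by
    intro m hm
    obtain ⟨l, hl, hlm⟩ := (csInf_lt_iff hSb hSne).1 hm
    exact hl m hlm.le
  have hlimcl : ∀ y ∈ D, Λ ≤ inner ℝ e y → mirror e Λ y ∈ closure D := by
    intro y hy hly
    rcases hly.eq_or_lt with h | h
    · have : mirror e Λ y = y := by rw [mirror, ← h]; simp
      rw [this]; exact subset_closure hy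
    · have ht : Tendsto (fun m => mirror e m y) (𝓝[>] Λ) (𝓝 (mirror e Λ y)) :=
        ((continuous_mirror₂ e).comp (Continuous.prodMk_left y)).continuousAt.continuousWithinAt
      refine mem_closure_of_tendsto ht ?_
      filter_upwards [Ioo_mem_nhdsGT h] with m hm
      exact hgt m hm.1 y hy hm.2
  have hfr : ∀ᵐ y : R2, y ∉ frontier D := by rw [ae_iff]; simpa using hf
  have hsym : ∀ᵐ y : R2, y ∈ half e Λ → ind D y ≤ ind D (mirror e Λ y) := by
    filter_upwards [(measurePreserving_mirror he Λ).quasiMeasurePreserving.ae hfr] with y h1 hy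
    by_cases h : y ∈ D
    · have h2 := hlimcl y h (le_of_lt hy)
      have h3 : mirror e Λ y ∈ D := by
        by_contra h3
        exact h1 (by rw [hD.frontier_eq]; exact ⟨h2, h3⟩)
      simp [ind, h, h3]
    · simp only [ind, h, not_false_eq_true, indicator_of_notMem]
      exact indicator_nonneg (fun _ _ => zero_le_one) _
  -- just beyond the critical position some mirrored cap sticks out and touches the boundary
  have hseq : ∀ n : ℕ, ∃ p : ℝ × R2, Λ - 1 / ((n : ℝ) + 1) ≤ p.1 ∧ p.1 ≤ Λ ∧ p.2 ∈ D ∧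
      p.1 < inner ℝ e p.2 ∧ mirror e p.1 p.2 ∈ frontier D := by
    intro n
    have hn : (0 : ℝ) < 1 / ((n : ℝ) + 1) := by positivity
    have hnot : Λ - 1 / ((n : ℝ) + 1) ∉ S := fun h => by
      have := csInf_le hSb h
      linarith
    simp only [hS, mem_ofPred_eq, CapReflects] at hnot
    push Not at hnot
    obtain ⟨m, hm, x, hx, hmx, hmD⟩ := hnot
    have hmΛ : m ≤ Λ := by
      by_contra! h
      exact hmD (hgt m h x hx hmx)
    have hs1 : mirror e (min Λ (inner ℝ e x)) x ∈ closure D := by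
      rcases le_total Λ (inner ℝ e x) with h | h
      · rw [min_eq_left h]; exact hlimcl x hx h
      · rw [min_eq_right h]
        have : mirror e (inner ℝ e x) x = x := by rw [mirror]; simp
        rw [this]; exact subset_closure hx
    obtain ⟨s, hs, hsf⟩ := exists_mem_frontier_of_path hD (f := fun s => mirror e s x)
      ((continuous_mirror₂ e).comp (Continuous.prodMk_left x)) (le_min hmΛ hmx.le) hmD hs1
    refine ⟨(s, x), hm.le.trans hs.1, hs.2.trans (min_le_left _ _), hx, ?_, hsf⟩
    refine lt_of_le_of_ne (hs.2.trans (min_le_right _ _)) fun h => ?_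
    have h2 : mirror e s x = x := by rw [mirror, show s = inner ℝ e x from h]; simp
    simp only [h2, hD.frontier_eq] at hsf
    exact hsf.2 hx
  choose p hp1 hp2 hp3 hp4 hp5 using hseq
  have hpm : Tendsto (fun n => (p n).1) atTop (𝓝 Λ) := by
    refine tendsto_of_tendsto_of_tendsto_of_le_of_le ?_ tendsto_const_nhds hp1 hp2
    simpa using (tendsto_const_nhds (x := Λ)).sub (tendsto_one_div_add_atTop_nhds_zero_nat (𝕜 := ℝ))
  obtain ⟨x, hx, φ, hφ, hlim⟩ := hb.isCompact_closure.tendsto_subseq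
    (x := fun n => (p n).2) fun n => subset_closure (hp3 n)
  have hm : Tendsto (fun n => (p (φ n)).1) atTop (𝓝 Λ) := hpm.comp hφ.tendsto_atTop
  have hw : Tendsto (fun n => (p (φ n)).2) atTop (𝓝 x) := hlim
  have hxΛ : Λ ≤ inner ℝ e x :=
    le_of_tendsto_of_tendsto' hm ((hcin.tendsto x).comp hw) fun n => (hp4 (φ n)).le
  have hxf : mirror e Λ x ∈ frontier D :=
    isClosed_frontier.mem_of_tendsto
      (((continuous_mirror₂ e).tendsto (Λ, x)).comp (hm.prodMk_nhds hw))
      (Eventually.of_forall fun n => hp5 (φ n))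
  have hconcl : ∫ y in D, inner ℝ e y = 0 ∧
      ∀ᵐ y : R2, y ∈ half e Λ → ind D (mirror e Λ y) = ind D y := by
    rcases hxΛ.eq_or_lt with h | h
    · refine symmetry_of_tangency hD hb hf hvol hΩ hR hΩR he hmo hsym h.symm hw hm
        (fun n => hcR _ (subset_closure (hp3 _)))
        (fun n => hcR _ (frontier_subset_closure (hp5 _))) (fun n => hp4 _) fun n => ?_
      rw [hc _ (hp5 _)]
      exact streamFun_le hD hb hf hΩ' hc (subset_closure (hp3 _))
    · refine symmetry_of_touching hD hb hvol hΩ hR hΩR he hmo hsym (hcR _ hx)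
        (hcR _ (frontier_subset_closure hxf)) h ?_
      rw [hc _ hxf]
      exact streamFun_le hD hb hf hΩ' hc hx
  obtain ⟨hmo0, hae⟩ := hconcl
  refine ⟨hmo0, ?_⟩
  -- the center of mass of `D` lies on its axis of symmetry
  have hΛ0 : Λ = 0 := by
    have hi : IntegrableOn (fun y : R2 => inner ℝ e y) D := integrableOn_of_continuous hb hcin
    have hk : IntegrableOn (fun _ : R2 => Λ) D := integrableOn_of_continuous hb continuous_const
    have h1 := integral_odd hD he Λ (φ := fun y => inner ℝ e y - Λ) (hi.sub hk)
      (fun y => by rw [inner_mirror he]; ring)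
    have h2 : ∫ y in half e Λ, (ind D y - ind D (mirror e Λ y)) * (inner ℝ e y - Λ) = 0 := by
      apply integral_eq_zero_of_ae
      filter_upwards [ae_restrict_mem (isOpen_half e Λ).measurableSet, ae_restrict_of_ae hae]
        with y hy h
      simp [h hy]
    rw [h2, integral_sub hi hk, hmo0, setIntegral_const, Measure.real, hvol,
      ENNReal.toReal_ofReal pi_pos.le, smul_eq_mul, zero_sub, neg_eq_zero, mul_eq_zero] at h1
    exact h1.resolve_left pi_pos.ne'
  rwa [hΛ0] at hgt

/-- Reflecting caps in every direction down to the origin makes `D` a centered disk. -/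
lemma eq_ball_of_capReflects {D : Set R2} (hD : IsOpen D) (hb : IsBounded D)
    (hvol : volume D = ENNReal.ofReal π)
    (h : ∀ e : R2, ‖e‖ = 1 → ∀ l > 0, CapReflects D e l) : D = Metric.ball 0 1 := by
  have hdown : ∀ x ∈ D, ∀ y : R2, ‖y‖ < ‖x‖ → y ∈ D := by
    intro x hx y hxy
    have hne : 0 < ‖x - y‖ := by
      rw [norm_pos_iff, sub_ne_zero]; rintro rfl; exact lt_irrefl _ hxy
    set d := ‖x - y‖ with hd
    have he : ‖d⁻¹ • (x - y)‖ = 1 := by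
      rw [norm_smul, norm_inv, Real.norm_eq_abs, abs_of_pos hne, ← hd, inv_mul_cancel₀ hne.ne']
    -- `y` is the mirror image of `x` in the line of points equidistant from `x` and `y`,
    -- which has positive distance `(‖x‖ ^ 2 - ‖y‖ ^ 2) / (2 * d)` from the origin
    have hin : inner ℝ (d⁻¹ • (x - y)) x - (‖x‖ ^ 2 - ‖y‖ ^ 2) / (2 * d) = d / 2 := by
      have h1 : d ^ 2 = ‖x‖ ^ 2 - 2 * inner ℝ x y + ‖y‖ ^ 2 := norm_sub_sq_real x y
      rw [inner_smul_left, inner_sub_left, real_inner_self_eq_norm_sq, real_inner_comm x y]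
      simp only [conj_trivial]
      field_simp
      linarith
    have hm := h _ he ((‖x‖ ^ 2 - ‖y‖ ^ 2) / (2 * d)) (by
      apply div_pos _ (by positivity)
      nlinarith [norm_nonneg y]) x hx (by linarith)
    rw [mirror, hin, show 2 * (d / 2) = d by ring, smul_smul, mul_inv_cancel₀ hne.ne', one_smul,
      sub_sub_cancel] at hm
    exact hm
  set r := sSup (norm '' D) with hr
  obtain ⟨R, hR⟩ := hb.subset_closedBall (0 : R2)
  have hbd : BddAbove (norm '' D) := by
    refine ⟨R, ?_⟩
    rintro _ ⟨y, hy, rfl⟩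
    exact mem_closedBall_zero_iff.1 (hR hy)
  have hne : D.Nonempty := by
    rw [nonempty_iff_ne_empty]; rintro rfl
    simp [pi_pos.not_ge] at hvol
  have hball : D = Metric.ball 0 r := by
    ext x
    rw [mem_ball_zero_iff]
    constructor
    · intro hx
      obtain ⟨ε, hε, hsub⟩ := Metric.isOpen_iff.1 hD x hx
      -- a point of `D` slightly farther from the origin
      obtain ⟨v, hv1, hv2⟩ : ∃ v : R2, ‖v‖ = ε / 2 ∧ ‖x + v‖ = ‖x‖ + ε / 2 := by
        by_cases hx0 : x = 0
        · refine ⟨(ε / 2) • EuclideanSpace.single 0 1, ?_, ?_⟩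
          all_goals simp [hx0, norm_smul, abs_of_pos hε]
        · have hn : 0 < ‖x‖ := norm_pos_iff.2 hx0
          refine ⟨(ε / 2 * ‖x‖⁻¹) • x, ?_, ?_⟩
          · rw [norm_smul, Real.norm_eq_abs, abs_of_pos (by positivity)]; field_simp
          · have : x + (ε / 2 * ‖x‖⁻¹) • x = (1 + ε / 2 * ‖x‖⁻¹) • x := by module
            rw [this, norm_smul, Real.norm_eq_abs, abs_of_pos (by positivity)]; field_simp
      have hmem : x + v ∈ D := hsub (by
        rw [Metric.mem_ball, dist_eq_norm, add_sub_cancel_left, hv1]; linarith)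
      have := le_csSup hbd (mem_image_of_mem norm hmem)
      rw [hv2] at this
      linarith
    · intro hx
      obtain ⟨_, ⟨y, hy, rfl⟩, hlt⟩ := exists_lt_of_lt_csSup (hne.image norm) hx
      exact hdown y hy x hlt
  have hr0 : 0 ≤ r := by
    obtain ⟨y, hy⟩ := hne
    exact (norm_nonneg y).trans (le_csSup hbd (mem_image_of_mem norm hy))
  have hv := hvol
  rw [hball, EuclideanSpace.volume_ball_fin_two] at hv
  have hr1 : r = 1 := by
    have := congrArg ENNReal.toReal hv
    rw [ENNReal.toReal_mul, ENNReal.toReal_pow, ENNReal.toReal_ofReal hr0,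
      ENNReal.toReal_ofReal pi_pos.le, mul_eq_right₀ pi_pos.ne'] at this
    nlinarith
  rw [hball, hr1]

/-- If `(D, Ω)` solves the rotating patch equation with `|D| = |B| = π`
and `Ω ∈ (0, Ω₀)`, then either `D = B` or `sup_{x ∈ ∂D} |x| > κ₀ Ω^{-1/2}`. -/
theorem small_angular_velocity_outmost_point :
    ∃ Ω₀ > (0 : ℝ), ∃ κ₀ > (0 : ℝ), ∀ (D : Set R2) (Ω : ℝ),
      IsPatchSolution D Ω → volume D = ENNReal.ofReal π →
      Ω ∈ Set.Ioo 0 Ω₀ →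
      D = Metric.ball (0 : R2) 1 ∨
        sSup ((fun x : R2 => ‖x‖) '' frontier D) > κ₀ * Ω ^ (-(1/2) : ℝ) := by
  refine ⟨1 / 8, by norm_num, 1 / 4, by norm_num, ?_⟩
  rintro D Ω ⟨hD, hb, -, ⟨γ, hγ, -, -, -, hrange⟩, ⟨c, hc⟩⟩ hvol ⟨hΩ, hΩ'⟩
  have hf : volume (frontier D) = 0 := by
    rw [← hrange]; exact volume_range_eq_zero (hγ.differentiable (by norm_num))
  rw [gt_iff_lt, or_iff_not_imp_right, not_lt]
  intro hle
  set R := sSup ((fun x : R2 => ‖x‖) '' frontier D) with hRdef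
  have hfbd : BddAbove ((fun x : R2 => ‖x‖) '' frontier D) :=
    ((hb.isCompact_closure.of_isClosed_subset isClosed_frontier
      frontier_subset_closure).image continuous_norm).bddAbove
  have hfR : ∀ x ∈ frontier D, ‖x‖ ≤ R := fun x hx =>
    le_csSup hfbd (mem_image_of_mem (fun x : R2 => ‖x‖) hx)
  have hR0 : 0 ≤ R := by
    have h0 : γ 0 ∈ frontier D := by rw [← hrange]; exact mem_range_self 0
    exact (norm_nonneg _).trans (hfR _ h0)
  have hR : D ⊆ Metric.closedBall 0 R := by
    intro x hx
    rw [mem_closedBall_zero_iff]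
    by_contra! h
    -- moving `x` radially outwards, the bounded set `D` is left through its boundary
    obtain ⟨L, hL⟩ := hb.subset_closedBall (0 : R2)
    have hx0 : 0 < ‖x‖ := hR0.trans_lt h
    have hLx : ‖x‖ ≤ L := mem_closedBall_zero_iff.1 (hL hx)
    have hL1 : 1 ≤ (L + 1) / ‖x‖ := by rw [le_div_iff₀ hx0]; linarith
    obtain ⟨s, hs, hsf⟩ := exists_mem_frontier_of_path hD (f := fun s : ℝ => (-s) • x)
      (by fun_prop) (a := -((L + 1) / ‖x‖)) (b := -1) (by linarith)
      (by
        intro hmem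
        have := mem_closedBall_zero_iff.1 (hL hmem)
        rw [norm_smul, neg_neg, Real.norm_eq_abs, abs_of_pos (by linarith),
          div_mul_cancel₀ _ hx0.ne'] at this
        linarith)
      (by simpa using subset_closure hx)
    have h1 := hfR _ hsf
    have hs2 : 1 ≤ -s := by linarith [hs.2]
    rw [norm_smul, Real.norm_eq_abs, abs_of_pos (by linarith)] at h1
    nlinarith
  have hΩR : 2 * Ω * (2 * R) ^ 2 < 1 := by
    have hpow : (Ω ^ (-(1/2) : ℝ)) ^ 2 = Ω⁻¹ := by
      rw [← Real.rpow_natCast, ← Real.rpow_mul hΩ.le]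
      norm_num
      exact Real.rpow_neg_one Ω
    have h1 : R ^ 2 ≤ (1 / 4 * Ω ^ (-(1/2) : ℝ)) ^ 2 := by gcongr
    rw [mul_pow, hpow] at h1
    calc 2 * Ω * (2 * R) ^ 2 = 8 * Ω * R ^ 2 := by ring
      _ ≤ 8 * Ω * ((1 / 4) ^ 2 * Ω⁻¹) := by gcongr
      _ = 1 / 2 := by field_simp; norm_num
      _ < 1 := by norm_num
  have key := fun (e : R2) (he : ‖e‖ = 1) =>
    moving_plane hD hb hf hvol hΩ hΩ' hR hΩR hc (e := e) he
  refine eq_ball_of_capReflects hD hb hvol fun e he => (key e he ?_).2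
  -- a positive moment in direction `e` would be a negative one in direction `-e`
  by_contra! hpos
  have h := key (-e) (by rwa [norm_neg])
  simp only [inner_neg_left, integral_neg] at h
  have := (h (by linarith)).1
  linarith
end
end

section
/- There exist an integer m₀ ≥ 2 and a constant c > 0 such that the following holds: if (D, Ω) is a solution of the rotating patch equation, D is m-fold symmetric for some integer m ≥ m₀, and D is not a disk centered at the origin, then 1/2 − Ω ≤ c/m. -/
/-!
The plane is identified with `ℂ`. Let `a` and `R` be the minimum and maximum of `|x|` on `∂D`.

The origin lies in `D` (`zero_mem_of_symm`): otherwise the simply connected set `D` carries a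
continuous branch of the logarithm, whose increment under the rotation by `2π/m` is a constant `w`;
as `m` rotations compose to the identity, `m w = 0`, so the rotation would be trivial.
Hence `B(0, a) ⊆ D ⊆ closedBall(0, R)`, and `a < R` because `D` is not a disk centered at `0`.

Write `log |x - y| = log max(|x|, |y|) + h_x(y)`, with `h_x` the kernel `oscKer x`. By Jensen's
formula `h_x` has mean zero on every circle centered at `0`, hence on every bounded radial set
(`integral_oscKer_radial`). On an `m`-fold symmetric set, `h_x` may be replaced by its average over
the `m`-th roots of unity, which equals `(1/m) log |x^m - y^m| - log max(|x|, |y|)` and is at most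
`(1/m) ρ^m`, where `ρ` is the ratio of the smaller to the larger of `|x|`, `|y|`. This one-sided
bound and the vanishing mean on the annulus `a ≤ |y| ≤ R` give the two-sided bound
`|∫_D h_x| ≤ (1/m) ∫_{a ≤ |y| ≤ R} ρ^m` (`abs_integral_oscKer_le`), which is at most both
`(π/m) (R² - a²)` and `6π |x|² / m²`.

The radial part `∫_D log max(r, |y|) dy` increases by at least `π a² log(b/a)` as `r` goes from
`a` to `b` (`radial_growth`). Put `δ = 1/2 - Ω`. Comparing `Ψ` at boundary points of
radii `a` and `a(1 + τ)` with `0 < τ ≤ δ` gives `a² δ τ / 2 ≤ 2 e`, where `2π e` bounds the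
oscillating part at both points (`two_point`, `main_term`).

Suppose `δ > 7/m` and let `η = min(δ, 1) ≥ 7/m`. If `R ≤ a(1 + η)`, take `τ = R/a - 1` and the first
bound on the oscillating part: this gives `δ ≤ 6/m`. Otherwise the connected curve `∂D` contains a
point of radius `a(1 + η)`, and the second bound gives `δ η ≤ 48/m²`. Both contradict the
assumption, so `m₀ = 7` and `c = 7` are admissible.
-/

open MeasureTheory Set Real Bornology

noncomputable section

/-! ### Circle means of the logarithmic kernel -/

lemma integrableOn_log_norm_sub {S : Set ℂ} (hS : IsBounded S) (z : ℂ) :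
    IntegrableOn (fun y : ℂ => Real.log ‖z - y‖) S := by
  obtain ⟨M, hM⟩ := hS.subset_ball z
  have h0 : IntegrableOn (fun y : ℂ => Real.log ‖y‖) (Metric.ball 0 M) := by
    rw [integrableOn_fun_norm_addHaar volume (f := Real.log)]
    have : IntegrableOn (fun y : ℝ => y * Real.log y) (Icc 0 M) :=
      Real.continuous_mul_log.continuousOn.integrableOn_Icc
    simpa [Complex.finrank_real_complex] using this.mono_set Ioo_subset_Icc_self
  have h1 := ((Measure.measurePreserving_sub_left volume z).integrableOn_comp_preimage
    (MeasurableEquiv.subLeft z).measurableEmbedding).2 h0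
  refine h1.mono_set (hM.trans fun y hy => ?_)
  simpa [dist_eq_norm, norm_sub_rev] using hy

/-- A function with vanishing integral on all circles about `0` has vanishing integral, by polar
coordinates. -/
lemma integral_eq_zero_of_circle {f : ℂ → ℝ} (hm : Measurable f) (hf : Integrable f)
    (h : ∀ s > 0, ∫ θ in Ioo (-π) π, f (circleMap 0 s θ) = 0) : ∫ y, f y = 0 := by
  have hsymm : ∀ p : ℝ × ℝ, Complex.polarCoord.symm p = circleMap 0 p.1 p.2 := by
    intro p
    simp [circleMap, Complex.exp_mul_I]
  have hmeas : Measurable (fun p : ℝ × ℝ => p.1 • f (circleMap 0 p.1 p.2)) := by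
    refine measurable_fst.smul (hm.comp ?_)
    unfold circleMap
    fun_prop
  have hint : IntegrableOn (fun p : ℝ × ℝ => p.1 • f (circleMap 0 p.1 p.2))
      (Ioi (0 : ℝ) ×ˢ Ioo (-π) π) (volume.prod volume) := by
    refine ⟨hmeas.aestronglyMeasurable, ?_⟩
    have h1 := Complex.lintegral_comp_polarCoord_symm (fun y => ‖f y‖ₑ)
    have h2 : ∫⁻ y, ‖f y‖ₑ < ⊤ := hf.2
    rw [← h1] at h2
    refine lt_of_eq_of_lt ?_ h2
    refine setLIntegral_congr_fun (measurableSet_Ioi.prod measurableSet_Ioo) ?_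
    rintro p ⟨hp, -⟩
    have hp' : (0 : ℝ) < p.1 := hp
    simp only [hsymm, smul_eq_mul, enorm_mul]
    rw [Real.enorm_of_nonneg hp'.le]
  rw [← Complex.integral_comp_polarCoord_symm]
  simp only [hsymm]
  have : polarCoord.target = Ioi (0 : ℝ) ×ˢ Ioo (-π) π := rfl
  rw [this, Measure.volume_eq_prod, setIntegral_prod _ hint]
  refine (setIntegral_congr_fun measurableSet_Ioi (g := fun _ => (0:ℝ)) ?_).trans (by simp)
  intro s hs
  simp only [smul_eq_mul]
  rw [integral_const_mul, h s hs, mul_zero]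

lemma log_max_eq {s a : ℝ} (hs : 0 < s) (ha : 0 ≤ a) :
    Real.log s + Real.posLog (s⁻¹ * a) = Real.log (max a s) := by
  rcases le_total a s with h | h
  · have : Real.posLog (s⁻¹ * a) = 0 := by
      rw [Real.posLog_eq_zero_iff, abs_of_nonneg (by positivity)]
      exact inv_mul_le_one_of_le₀ h hs.le
    rw [this, max_eq_right h, add_zero]
  · rw [max_eq_left h, Real.posLog_eq_log, Real.log_mul, Real.log_inv]
    · ring
    · positivity
    · exact (hs.trans_le h).ne'
    · rw [abs_of_nonneg (by positivity), inv_mul_eq_div, le_div_iff₀ hs]; linarith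

/-- The oscillating part `log |x - y| - log max(|x|, |y|)` of the logarithmic kernel. -/
def oscKer (x y : ℂ) : ℝ := Real.log ‖x - y‖ - Real.log (max ‖x‖ ‖y‖)

/-- Jensen's formula: the circle mean of `log |x - y|` over `|y| = s` is `log max(|x|, s)`, so the
oscillating kernel has mean zero. -/
lemma circle_oscKer (x : ℂ) {s : ℝ} (hs : 0 < s) :
    ∫ θ in Ioo (-π) π, oscKer x (circleMap 0 s θ) = 0 := by
  have h1 := circleAverage_log_norm_sub_const_eq_log_radius_add_posLog (a := x) (c := 0) hs.ne'
  rw [zero_sub, norm_neg, log_max_eq hs (norm_nonneg _)] at h1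
  have hci : CircleIntegrable (fun z => Real.log ‖z - x‖) 0 s :=
    MeromorphicOn.circleIntegrable_log_norm (fun _ _ ↦ by fun_prop)
  have hsub := circleAverage_sub hci (circleIntegrable_const (Real.log (max ‖x‖ s)) 0 s)
  rw [h1, circleAverage_const, sub_self] at hsub
  rw [← integral_Ioc_eq_integral_Ioo, ← intervalIntegral.integral_of_le (by linarith [pi_pos])]
  rw [circleAverage_def, smul_eq_zero] at hsub
  have h2 := hsub.resolve_left (by positivity)
  have hper : Function.Periodic (fun θ => oscKer x (circleMap 0 s θ)) (2 * π) := by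
    intro θ
    simp only [periodic_circleMap 0 s θ]
  have h3 := hper.intervalIntegral_add_eq (-π) (0 : ℝ)
  rw [show -π + 2 * π = π by ring, zero_add] at h3
  refine h3.trans (Eq.trans ?_ h2)
  refine intervalIntegral.integral_congr fun θ _ => ?_
  simp [oscKer, norm_sub_rev x, abs_of_pos hs]

lemma measurable_oscKer (x : ℂ) : Measurable (oscKer x) := by
  unfold oscKer; fun_prop

lemma integrableOn_log_max {S : Set ℂ} (hS : IsBounded S) {r : ℝ} (hr : 0 < r) :
    IntegrableOn (fun y : ℂ => Real.log (max r ‖y‖)) S := by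
  obtain ⟨M, hM⟩ := hS.subset_closedBall (0:ℂ)
  refine IntegrableOn.mono_set ?_ hM
  refine ContinuousOn.integrableOn_compact (isCompact_closedBall _ _) ?_
  refine ContinuousOn.log (by fun_prop) fun y _ => (lt_max_of_lt_left hr).ne'

lemma integrableOn_oscKer {S : Set ℂ} (hS : IsBounded S) {x : ℂ} (hx : x ≠ 0) :
    IntegrableOn (oscKer x) S :=
  (integrableOn_log_norm_sub hS x).sub (integrableOn_log_max hS (norm_pos_iff.2 hx))

/-- The oscillating kernel integrates to zero over every bounded radial set `{|y| ∈ T}`. -/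
lemma integral_oscKer_radial {T : Set ℝ} (hT : MeasurableSet T)
    (hb : IsBounded {y : ℂ | ‖y‖ ∈ T}) {x : ℂ} (hx : x ≠ 0) :
    ∫ y in {y : ℂ | ‖y‖ ∈ T}, oscKer x y = 0 := by
  have hS : MeasurableSet {y : ℂ | ‖y‖ ∈ T} := measurable_norm hT
  rw [← integral_indicator hS]
  refine integral_eq_zero_of_circle ((measurable_oscKer x).indicator hS)
    ((integrable_indicator_iff hS).2 (integrableOn_oscKer hb hx)) fun s hs => ?_
  by_cases h : s ∈ T
  · rw [← circle_oscKer x hs]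
    refine setIntegral_congr_fun measurableSet_Ioo fun θ _ => ?_
    simp [indicator, h, abs_of_pos hs]
  · refine (setIntegral_congr_fun (g := fun _ => (0:ℝ)) measurableSet_Ioo fun θ _ => ?_).trans
      (by simp)
    simp [indicator, h, abs_of_pos hs]

/-! ### Averaging over the roots of unity -/

/-- The quotient of the smaller by the larger of `|x|` and `|y|`; it is `0` for `x = y = 0`. -/
def ratio (x y : ℂ) : ℝ := min ‖x‖ ‖y‖ / max ‖x‖ ‖y‖

lemma ratio_nonneg (x y : ℂ) : 0 ≤ ratio x y := by unfold ratio; positivity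

lemma ratio_le_one (x y : ℂ) : ratio x y ≤ 1 := by
  unfold ratio
  exact div_le_one_of_le₀ min_le_max (by positivity)

/-- The average of `oscKer x` over the orbit of `y` under the `m`-th roots of unity. -/
def avgKer (m : ℕ) (x y : ℂ) : ℝ :=
  (1 / m : ℝ) * ∑ μ ∈ Polynomial.nthRootsFinset m (1 : ℂ), oscKer x (μ * y)

lemma norm_of_mem_roots {m : ℕ} (hm : 0 < m) {μ : ℂ}
    (h : μ ∈ Polynomial.nthRootsFinset m (1 : ℂ)) : ‖μ‖ = 1 :=
  Complex.norm_eq_one_of_pow_eq_one ((Polynomial.mem_nthRootsFinset hm _).1 h) (by omega)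

/-- The factorization `x^m - y^m = ∏ (x - μ y)` turns the average into
`(1/m) log |x^m - y^m| - log max(|x|, |y|)`, and `|x^m - y^m| ≤ max(|x|, |y|)^m (1 + ρ^m)`. The
condition `x^m ≠ y^m` excludes the points where the junk value `log 0 = 0` intervenes. -/
lemma avgKer_le {m : ℕ} (hm : 0 < m) {x : ℂ} (hx : x ≠ 0) {y : ℂ} (hy : x ^ m ≠ y ^ m) :
    avgKer m x y ≤ (1 / m : ℝ) * ratio x y ^ m := by
  have hprim := Complex.isPrimitiveRoot_exp m hm.ne'
  have hprod := hprim.pow_sub_pow_eq_prod_sub_mul x y hm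
  have hne : ∏ μ ∈ Polynomial.nthRootsFinset m (1 : ℂ), (x - μ * y) ≠ 0 := by
    rw [← hprod]; exact sub_ne_zero.2 hy
  have hM : 0 < max ‖x‖ ‖y‖ := lt_max_of_lt_left (norm_pos_iff.2 hx)
  have hsum : ∑ μ ∈ Polynomial.nthRootsFinset m (1 : ℂ), oscKer x (μ * y)
      = Real.log ‖x ^ m - y ^ m‖ - m * Real.log (max ‖x‖ ‖y‖) := by
    have h1 : Real.log ‖x ^ m - y ^ m‖
        = ∑ μ ∈ Polynomial.nthRootsFinset m (1 : ℂ), Real.log ‖x - μ * y‖ := by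
      rw [hprod, norm_prod, Real.log_prod]
      intro μ hμ
      exact norm_ne_zero_iff.2 (Finset.prod_ne_zero_iff.1 hne μ hμ)
    rw [h1]
    have h2 : ∀ μ ∈ Polynomial.nthRootsFinset m (1 : ℂ), oscKer x (μ * y)
        = Real.log ‖x - μ * y‖ - Real.log (max ‖x‖ ‖y‖) := by
      intro μ hμ
      rw [oscKer, norm_mul, norm_of_mem_roots hm hμ, one_mul]
    rw [Finset.sum_congr rfl h2, Finset.sum_sub_distrib, Finset.sum_const,
      hprim.card_nthRootsFinset, nsmul_eq_mul]
  unfold avgKer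
  rw [hsum]
  gcongr
  have hb : ‖x ^ m - y ^ m‖ ≤ max ‖x‖ ‖y‖ ^ m * (1 + ratio x y ^ m) := by
    refine (norm_sub_le _ _).trans (le_of_eq ?_)
    rw [norm_pow, norm_pow, ratio, mul_add, ← mul_pow, mul_div_cancel₀ _ hM.ne']
    rcases le_total ‖x‖ ‖y‖ with h | h
    · rw [max_eq_right h, min_eq_left h]; ring
    · rw [max_eq_left h, min_eq_right h]; ring
  have hr := pow_nonneg (ratio_nonneg x y) m
  have h3 := Real.log_le_log (norm_pos_iff.2 (sub_ne_zero.2 hy)) hb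
  rw [Real.log_mul (by positivity) (by positivity), Real.log_pow] at h3
  have h4 := Real.log_le_sub_one_of_pos (show 0 < 1 + ratio x y ^ m by positivity)
  linarith

lemma ae_avgKer_le {m : ℕ} (hm : 0 < m) {x : ℂ} (hx : x ≠ 0) :
    ∀ᵐ y : ℂ, avgKer m x y ≤ (1 / m : ℝ) * ratio x y ^ m := by
  have hfin : {y : ℂ | y ^ m = x ^ m}.Finite := by
    refine (Multiset.finite_toSet (Polynomial.nthRoots m (x ^ m))).subset fun y hy => ?_
    exact (Polynomial.mem_nthRoots hm).2 hy
  have : ∀ᵐ y : ℂ, y ∉ {y : ℂ | y ^ m = x ^ m} :=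
    measure_eq_zero_iff_ae_notMem.1 (hfin.measure_zero volume)
  filter_upwards [this] with y hy
  exact avgKer_le hm hx fun h => hy h.symm

/-- Invariance of `A ⊆ ℂ` under multiplication by every `m`-th root of unity. -/
def RootInvariant (m : ℕ) (A : Set ℂ) : Prop :=
  ∀ μ ∈ Polynomial.nthRootsFinset m (1 : ℂ), ∀ y, μ * y ∈ A ↔ y ∈ A

lemma rot_mp {μ : ℂ} (h : ‖μ‖ = 1) :
    MeasurePreserving (fun y : ℂ => μ * y) ∧ MeasurableEmbedding (fun y : ℂ => μ * y) := by
  let c : Circle := ⟨μ, by simp [Submonoid.unitSphere, h]⟩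
  have h1 : (fun y : ℂ => μ * y) = rotation c := by
    ext y; exact (rotation_apply c y).symm
  rw [h1]
  exact ⟨(rotation c).measurePreserving, (rotation c).toMeasurableEquiv.measurableEmbedding⟩

lemma integrableOn_oscKer_rot {m : ℕ} (hm : 0 < m) {A : Set ℂ} (hA : RootInvariant m A)
    (hb : IsBounded A) {x : ℂ} (hx : x ≠ 0) {μ : ℂ}
    (hμ : μ ∈ Polynomial.nthRootsFinset m (1 : ℂ)) :
    IntegrableOn (fun y => oscKer x (μ * y)) A ∧
      ∫ y in A, oscKer x (μ * y) = ∫ y in A, oscKer x y := by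
  obtain ⟨h1, h2⟩ := rot_mp (norm_of_mem_roots hm hμ)
  have hpre : (fun y : ℂ => μ * y) ⁻¹' A = A := by
    ext y; exact hA μ hμ y
  constructor
  · have := (h1.integrableOn_comp_preimage h2 (f := oscKer x) (s := A)).2
      (integrableOn_oscKer hb hx)
    rwa [hpre] at this
  · have := h1.setIntegral_preimage_emb h2 (oscKer x) A
    rwa [hpre] at this

lemma integrableOn_avgKer {m : ℕ} (hm : 0 < m) {A : Set ℂ} (hA : RootInvariant m A)
    (hb : IsBounded A) {x : ℂ} (hx : x ≠ 0) : IntegrableOn (avgKer m x) A :=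
  (integrable_finsetSum _ fun _ hμ => (integrableOn_oscKer_rot hm hA hb hx hμ).1).const_mul _

/-- On an invariant set the averaged kernel has the same integral as the original one. -/
lemma integral_avgKer {m : ℕ} (hm : 0 < m) {A : Set ℂ} (hA : RootInvariant m A)
    (hb : IsBounded A) {x : ℂ} (hx : x ≠ 0) :
    ∫ y in A, avgKer m x y = ∫ y in A, oscKer x y := by
  unfold avgKer
  rw [integral_const_mul, integral_finsetSum _ fun _ hμ =>
    (integrableOn_oscKer_rot hm hA hb hx hμ).1,
    Finset.sum_congr rfl fun μ hμ => (integrableOn_oscKer_rot hm hA hb hx hμ).2,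
    Finset.sum_const, (Complex.isPrimitiveRoot_exp m hm.ne').card_nthRootsFinset, nsmul_eq_mul]
  field_simp

lemma rootInvariant_radial {m : ℕ} (hm : 0 < m) (T : Set ℝ) :
    RootInvariant m {y : ℂ | ‖y‖ ∈ T} := by
  intro μ hμ y
  simp [norm_of_mem_roots hm hμ]

lemma measurable_ratio (x : ℂ) : Measurable (ratio x) := by
  unfold ratio; fun_prop

lemma integrableOn_ratio_pow (m : ℕ) {A : Set ℂ} (hb : IsBounded A) (x : ℂ) :
    IntegrableOn (fun y => ratio x y ^ m) A := by
  refine IntegrableOn.of_bound hb.measure_lt_top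
    ((measurable_ratio x).pow_const m).aestronglyMeasurable 1 (ae_of_all _ fun y => ?_)
  rw [Real.norm_of_nonneg (pow_nonneg (ratio_nonneg x y) m)]
  exact pow_le_one₀ (ratio_nonneg x y) (ratio_le_one x y)

/-- The one-sided bound `avgKer_le` becomes two-sided: it is applied to the part of `A` in the annulus
`a ≤ |y| ≤ M` and to the complement of `A` in the annulus, whose integrals of the kernel add up to
zero. -/
lemma abs_integral_oscKer_le {m : ℕ} (hm : 0 < m) {A : Set ℂ} (hAm : MeasurableSet A)
    (hA : RootInvariant m A) {a M : ℝ} (hball : Metric.ball (0 : ℂ) a ⊆ A)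
    (hsub : A ⊆ Metric.closedBall (0 : ℂ) M) {x : ℂ} (hx : x ≠ 0) :
    |∫ y in A, oscKer x y| ≤ (1 / m : ℝ) * ∫ y in {y : ℂ | ‖y‖ ∈ Icc a M}, ratio x y ^ m := by
  set B : Set ℂ := {y : ℂ | ‖y‖ ∈ Iio a} with hB
  set S : Set ℂ := {y : ℂ | ‖y‖ ∈ Icc a M} with hS
  have hBm : MeasurableSet B := measurable_norm measurableSet_Iio
  have hSm : MeasurableSet S := measurable_norm measurableSet_Icc
  have hBA : B ⊆ A := fun y hy => hball (by simpa [B] using hy)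
  have hbA : IsBounded A := Metric.isBounded_closedBall.subset hsub
  have hbS : IsBounded S := Metric.isBounded_closedBall.subset
    (fun y hy => by simpa using hy.2 : S ⊆ Metric.closedBall 0 M)
  have hbB : IsBounded B := hbA.subset hBA
  have hE : A \ B ⊆ S := fun y hy => ⟨not_lt.1 hy.2, by simpa using hsub hy.1⟩
  have hiS : IntegrableOn (avgKer m x) S :=
    integrableOn_avgKer hm (rootInvariant_radial hm _) hbS hx
  have hiA : IntegrableOn (avgKer m x) A := integrableOn_avgKer hm hA hbA hx
  have hirS : IntegrableOn (fun y => (1 / m : ℝ) * ratio x y ^ m) S :=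
    (integrableOn_ratio_pow m hbS x).const_mul _
  have hnn : ∀ y, 0 ≤ (1 / m : ℝ) * ratio x y ^ m := fun y =>
    mul_nonneg (by positivity) (pow_nonneg (ratio_nonneg x y) m)
  have hB0 : ∫ y in B, avgKer m x y = 0 := by
    rw [integral_avgKer hm (rootInvariant_radial hm _) hbB hx]
    exact integral_oscKer_radial measurableSet_Iio hbB hx
  have hS0 : ∫ y in S, avgKer m x y = 0 := by
    rw [integral_avgKer hm (rootInvariant_radial hm _) hbS hx]
    exact integral_oscKer_radial measurableSet_Icc hbS hx
  have hAE : ∫ y in A, oscKer x y = ∫ y in A \ B, avgKer m x y := by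
    rw [← integral_avgKer hm hA hbA hx, setIntegral_sdiff hBm hiA hBA, hB0, sub_zero]
  have hbound : ∀ F ⊆ S, MeasurableSet F →
      ∫ y in F, avgKer m x y ≤ ∫ y in S, (1 / m : ℝ) * ratio x y ^ m := by
    intro F hF hFm
    calc ∫ y in F, avgKer m x y ≤ ∫ y in F, (1 / m : ℝ) * ratio x y ^ m :=
          integral_mono_ae (hiS.mono_set hF) (hirS.mono_set hF)
            (ae_restrict_of_ae (ae_avgKer_le hm hx))
      _ ≤ _ := setIntegral_mono_set hirS (ae_of_all _ hnn) (LE.le.eventuallyLE hF)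
  have hEm : MeasurableSet (A \ B) := hAm.diff hBm
  have h1 := hbound _ hE hEm
  have h2 := hbound _ (sdiff_subset : S \ (A \ B) ⊆ S) (hSm.diff hEm)
  rw [setIntegral_sdiff hEm hiS hE, hS0] at h2
  rw [integral_const_mul] at h1 h2
  rw [hAE, abs_le]
  constructor <;> linarith

/-! ### Bounds for the oscillating part -/

lemma volume_annulus {a M : ℝ} (ha : 0 ≤ a) (haM : a ≤ M) :
    volume.real {y : ℂ | ‖y‖ ∈ Icc a M} = π * (M ^ 2 - a ^ 2) := by
  have h : {y : ℂ | ‖y‖ ∈ Icc a M} = Metric.closedBall 0 M \ Metric.ball 0 a := by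
    ext y; simp [and_comm]
  rw [h, measureReal_sdiff (Metric.ball_subset_closedBall.trans
    (Metric.closedBall_subset_closedBall haM)) measurableSet_ball measure_closedBall_lt_top.ne]
  simp only [measureReal_def, Complex.volume_ball, Complex.volume_closedBall]
  simp [ENNReal.toReal_ofReal, ha, ha.trans haM]
  ring

lemma integral_ratio_pow_le_volume (m : ℕ) {a M : ℝ} (ha : 0 ≤ a) (haM : a ≤ M) (x : ℂ) :
    ∫ y in {y : ℂ | ‖y‖ ∈ Icc a M}, ratio x y ^ m ≤ π * (M ^ 2 - a ^ 2) := by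
  have hb : IsBounded {y : ℂ | ‖y‖ ∈ Icc a M} := Metric.isBounded_closedBall.subset
    (fun y hy => by simpa using hy.2 : {y : ℂ | ‖y‖ ∈ Icc a M} ⊆ Metric.closedBall 0 M)
  rw [← volume_annulus ha haM]
  calc _ ≤ ∫ y in {y : ℂ | ‖y‖ ∈ Icc a M}, (1 : ℝ) := by
        refine integral_mono (integrableOn_ratio_pow m hb x)
          (integrableOn_const hb.measure_lt_top.ne) fun y => ?_
        exact pow_le_one₀ (ratio_nonneg x y) (ratio_le_one x y)
    _ = _ := by simp

/-- In polar coordinates the integral over the whole plane is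
`2π |x|² (1/(m+2) + 1/(m-2))`, and `1/(m-2) ≤ 2/m`. -/
lemma integral_ratio_pow_le {m : ℕ} (hm : 6 ≤ m) (S : Set ℂ) {x : ℂ} (hx : x ≠ 0) :
    ∫ y in S, ratio x y ^ m ≤ 6 * π * ‖x‖ ^ 2 / m := by
  set r := ‖x‖ with hr
  have hr0 : 0 < r := norm_pos_iff.2 hx
  have hm' : (6 : ℝ) ≤ m := by exact_mod_cast hm
  set g : ℝ → ℝ := fun s => (min r s / max r s) ^ m with hg
  have hin : ∀ s ∈ Ioc 0 r, s * g s = (r⁻¹) ^ m * s ^ (m + 1) := by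
    intro s hs
    simp only [hg]
    rw [min_eq_right hs.2, max_eq_left hs.2, div_eq_mul_inv, mul_pow]
    ring
  have hout : ∀ s ∈ Ioi r, s * g s = r ^ m * s ^ (1 - m : ℝ) := by
    intro s hs
    have hs' : r < s := hs
    have hs0 : 0 < s := hr0.trans hs'
    simp only [hg]
    rw [min_eq_left hs'.le, max_eq_right hs'.le, Real.rpow_sub hs0, Real.rpow_one,
      Real.rpow_natCast, div_pow]
    ring
  have hi1 : IntegrableOn (fun s => s * g s) (Ioc 0 r) := by
    rw [integrableOn_congr_fun hin measurableSet_Ioc]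
    exact ((by fun_prop : Continuous fun s : ℝ => (r⁻¹) ^ m * s ^ (m + 1)).integrableOn_Icc
      (a := 0) (b := r)).mono_set Ioc_subset_Icc_self
  have hi2 : IntegrableOn (fun s => s * g s) (Ioi r) := by
    rw [integrableOn_congr_fun hout measurableSet_Ioi]
    exact (integrableOn_Ioi_rpow_of_lt (by linarith) hr0).const_mul _
  have hU : Ioi (0 : ℝ) = Ioc 0 r ∪ Ioi r := (Ioc_union_Ioi_eq_Ioi hr0.le).symm
  have hint : IntegrableOn (fun s => s * g s) (Ioi 0) := by
    rw [hU]; exact hi1.union hi2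
  have hv1 : ∫ s in Ioc 0 r, s * g s = r ^ 2 / (m + 2) := by
    rw [setIntegral_congr_fun measurableSet_Ioc hin, integral_const_mul,
      ← intervalIntegral.integral_of_le hr0.le, integral_pow]
    push_cast
    rw [inv_pow]
    field_simp
    ring
  have hv2 : ∫ s in Ioi r, s * g s = r ^ 2 / (m - 2) := by
    rw [setIntegral_congr_fun measurableSet_Ioi hout, integral_const_mul,
      integral_Ioi_rpow_of_lt (by linarith) hr0]
    have h2 : r ^ (1 - m + 1 : ℝ) = r ^ 2 / r ^ m := by
      rw [show (1 - m + 1 : ℝ) = (2 : ℕ) - m by push_cast; ring, Real.rpow_sub hr0,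
        Real.rpow_natCast, Real.rpow_natCast]
    rw [h2]
    have h3 : (1 - m + 1 : ℝ) = -(m - 2) := by ring
    have h4 : (m - 2 : ℝ) ≠ 0 := by linarith
    rw [h3, neg_div_neg_eq]
    field_simp
  have hvol : volume.real (Metric.ball (0 : ℂ) 1) = π := by
    simp [measureReal_def, Complex.volume_ball]
  have hnorm := integral_fun_norm_addHaar (volume : Measure ℂ) g
  have hnormi := (integrable_fun_norm_addHaar (volume : Measure ℂ) (f := g)).2
    (by simpa [Complex.finrank_real_complex] using hint)
  have hval : ∫ y : ℂ, g ‖y‖ = 2 * π * (r ^ 2 / (m + 2) + r ^ 2 / (m - 2)) := by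
    rw [hnorm, hvol, Complex.finrank_real_complex]
    simp only [Nat.add_one_sub_one, pow_one, smul_eq_mul, nsmul_eq_mul]
    have hdisj : Disjoint (Ioc 0 r) (Ioi r) :=
      Set.disjoint_left.2 fun s hs hs' => not_lt.2 hs.2 hs'
    rw [hU, setIntegral_union hdisj measurableSet_Ioi hi1 hi2, hv1, hv2]
    push_cast
    ring
  calc ∫ y in S, ratio x y ^ m ≤ ∫ y, ratio x y ^ m :=
        setIntegral_le_integral hnormi (ae_of_all _ fun y => pow_nonneg (ratio_nonneg x y) m)
    _ = 2 * π * (r ^ 2 / (m + 2) + r ^ 2 / (m - 2)) := hval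
    _ ≤ 2 * π * (r ^ 2 / m + 2 * r ^ 2 / m) := by
        have h1 : r ^ 2 / (m + 2) ≤ r ^ 2 / m := by gcongr; linarith
        have h2 : r ^ 2 / (m - 2) ≤ 2 * r ^ 2 / m := by
          rw [div_le_div_iff₀ (by linarith) (by linarith)]
          nlinarith [sq_nonneg r]
        gcongr
    _ = _ := by ring

/-! ### The radial part and the comparison of two boundary points -/

/-- Between radii `a ≤ b`, the radial part of the potential of `A` grows at least as much as that
of the disk of radius `a`, since `max b |y| ≥ max a |y|` outside this disk. -/
lemma radial_growth {A : Set ℂ} (hbA : IsBounded A) {a b : ℝ} (ha : 0 < a)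
    (hab : a ≤ b) (hball : Metric.ball (0 : ℂ) a ⊆ A) :
    π * a ^ 2 * Real.log (b / a) ≤
      (∫ y in A, Real.log (max b ‖y‖)) - ∫ y in A, Real.log (max a ‖y‖) := by
  have hb : 0 < b := ha.trans_le hab
  have hib := integrableOn_log_max hbA hb
  have hia := integrableOn_log_max hbA ha
  have hnn : ∀ y : ℂ, 0 ≤ Real.log (max b ‖y‖) - Real.log (max a ‖y‖) := fun y =>
    sub_nonneg.2 (Real.log_le_log (lt_max_of_lt_left ha) (max_le_max_right _ hab))
  rw [← integral_sub hib hia]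
  calc π * a ^ 2 * Real.log (b / a) = ∫ y in Metric.ball (0 : ℂ) a, Real.log (b / a) := by
        rw [setIntegral_const, measureReal_def, Complex.volume_ball]
        simp only [ENNReal.toReal_mul, ENNReal.toReal_pow, ENNReal.toReal_ofReal ha.le,
          ENNReal.coe_toReal, NNReal.coe_real_pi, smul_eq_mul]
        ring
    _ = ∫ y in Metric.ball (0 : ℂ) a, (Real.log (max b ‖y‖) - Real.log (max a ‖y‖)) := by
        refine setIntegral_congr_fun measurableSet_ball fun y hy => ?_
        have hy' : ‖y‖ < a := by simpa using hy
        rw [max_eq_left (hy'.le.trans hab), max_eq_left hy'.le, Real.log_div hb.ne' ha.ne']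
    _ ≤ _ := setIntegral_mono_set (hib.sub hia) (ae_of_all _ hnn) (LE.le.eventuallyLE hball)

/-- Comparison of the stream function at a point `x` of minimal radius `a` and a point `x'` of larger
radius, when it takes the same value at both: the gain of the radial part is controlled by the
bound `2π e` on the oscillating parts. -/
lemma two_point {A : Set ℂ} (hbA : IsBounded A)
    {a Ω e : ℝ} (ha : 0 < a)
    (hball : Metric.ball (0 : ℂ) a ⊆ A) {x x' : ℂ} (hx : ‖x‖ = a) (hx' : a ≤ ‖x'‖)
    (he : |∫ y in A, oscKer x y| ≤ 2 * π * e) (he' : |∫ y in A, oscKer x' y| ≤ 2 * π * e)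
    (hΨ : 1 / (2 * π) * (∫ y in A, Real.log ‖x - y‖) - Ω / 2 * ‖x‖ ^ 2 =
      1 / (2 * π) * (∫ y in A, Real.log ‖x' - y‖) - Ω / 2 * ‖x'‖ ^ 2) :
    a ^ 2 / 2 * Real.log (‖x'‖ / a) - Ω / 2 * (‖x'‖ ^ 2 - a ^ 2) ≤ 2 * e := by
  have hx0 : 0 < ‖x'‖ := ha.trans_le hx'
  have hsplit : ∀ z : ℂ, 0 < ‖z‖ → ∫ y in A, Real.log ‖z - y‖ =
      (∫ y in A, oscKer z y) + ∫ y in A, Real.log (max ‖z‖ ‖y‖) := by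
    intro z hz
    rw [← integral_add (integrableOn_oscKer hbA (norm_pos_iff.1 hz)) (integrableOn_log_max hbA hz)]
    simp [oscKer]
  rw [hsplit x (hx ▸ ha), hsplit x' hx0] at hΨ
  have hg := radial_growth hbA ha hx' hball
  rw [hx] at hΨ
  rw [abs_le] at he he'
  have hπ := pi_pos
  field_simp at hΨ
  have : π * (a ^ 2 / 2 * Real.log (‖x'‖ / a) - Ω / 2 * (‖x'‖ ^ 2 - a ^ 2)) ≤ π * (2 * e) := by
    linarith
  exact le_of_mul_le_mul_left this hπ

/-! ### Inner and outer radii of the patch -/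

/-- A connected set meeting an open set `A` and its complement meets the frontier of `A`. -/
lemma frontier_crossing {X : Type*} [TopologicalSpace X] {s A : Set X} (hs : IsPreconnected s)
    (hA : IsOpen A) {p q : X} (hp : p ∈ s) (hpA : p ∈ A) (hq : q ∈ s) (hqA : q ∉ A) :
    ∃ z ∈ s, z ∈ frontier A := by
  by_contra! h
  have hcov : s ⊆ A ∪ (closure A)ᶜ := by
    intro z hz
    by_cases hzA : z ∈ A
    · exact Or.inl hzA
    · refine Or.inr fun hzc => h z hz ?_
      rw [hA.frontier_eq]
      exact ⟨hzc, hzA⟩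
  obtain ⟨z, -, hz1, hz2⟩ := hs A (closure A)ᶜ hA isClosed_closure.isOpen_compl hcov
    ⟨p, hp, hpA⟩ ⟨q, hq, (hcov hq).resolve_left hqA⟩
  exact hz2 (subset_closure hz1)

lemma ball_subset_of_frontier {A : Set ℂ} (hA : IsOpen A) (h0 : (0 : ℂ) ∈ A) {a : ℝ}
    (h : ∀ z ∈ frontier A, a ≤ ‖z‖) : Metric.ball (0 : ℂ) a ⊆ A := by
  intro y hy
  by_contra hyA
  have ha : 0 < a := Metric.pos_of_mem_ball hy
  obtain ⟨z, hz, hzf⟩ := frontier_crossing (convex_ball (0 : ℂ) a).isPreconnected hA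
    (Metric.mem_ball_self ha) h0 hy hyA
  have := h z hzf
  rw [mem_ball_zero_iff] at hz
  linarith

lemma subset_closedBall_of_frontier {A : Set ℂ} (hA : IsOpen A) (hb : IsBounded A) {R : ℝ}
    (h : ∀ z ∈ frontier A, ‖z‖ ≤ R) (hR : 0 ≤ R) : A ⊆ Metric.closedBall (0 : ℂ) R := by
  intro y hy
  by_contra hyR
  have hyR' : R < ‖y‖ := by simpa using hyR
  have hy0 : 0 < ‖y‖ := hR.trans_lt hyR'
  obtain ⟨M, hM⟩ := hb.subset_closedBall (0 : ℂ)
  have hyM : ‖y‖ ≤ M := by simpa using hM hy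
  have hconn : IsPreconnected ((fun t : ℝ => t • y) '' Ici 1) :=
    isPreconnected_Ici.image _ (by fun_prop)
  set t : ℝ := M / ‖y‖ + 1 with ht
  have ht1 : 1 ≤ t := by
    have : 0 ≤ M / ‖y‖ := div_nonneg (hy0.le.trans hyM) hy0.le
    linarith
  obtain ⟨z, ⟨s, hs, rfl⟩, hzf⟩ := frontier_crossing hconn hA (p := y) (q := t • y)
    ⟨1, by simp, by simp⟩ hy ⟨t, ht1, rfl⟩ (fun htA => by
      have h1 := hM htA
      rw [mem_closedBall_zero_iff, norm_smul, Real.norm_of_nonneg (by linarith), ht, add_mul,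
        div_mul_cancel₀ _ hy0.ne'] at h1
      linarith)
  have h1 := h _ hzf
  have hs1 : (1 : ℝ) ≤ s := hs
  simp only [norm_smul] at h1
  rw [Real.norm_of_nonneg (by linarith)] at h1
  nlinarith

/-! ### The bound in the complex plane -/

/-- Lower bound for the gain of the radial part at `Ω = 1/2 - δ`, `τ ≤ δ`, between radii `a` and
`a (1 + τ)`, from `log (1 + τ) ≥ τ - τ²/2`. -/
lemma main_term {a τ δ : ℝ} (hτ : 0 < τ) (hτδ : τ ≤ δ) :
    a ^ 2 * (δ * τ / 2) ≤
      a ^ 2 / 2 * Real.log (1 + τ) - (1 / 2 - δ) / 2 * (a ^ 2 * (2 * τ + τ ^ 2)) := by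
  have h1 := Real.le_log_one_add_of_nonneg hτ.le
  have h2 : τ - τ ^ 2 / 2 ≤ 2 * τ / (τ + 2) := by
    rw [le_div_iff₀ (by linarith)]
    nlinarith [pow_pos hτ 3]
  have h3 : δ * τ / 2 ≤ (τ - τ ^ 2 / 2) / 2 - (1 / 2 - δ) / 2 * (2 * τ + τ ^ 2) := by
    nlinarith [mul_pos hτ (hτ.trans_le hτδ), mul_nonneg hτ.le (sub_nonneg.2 hτδ),
      pow_pos hτ 3, mul_pos (pow_pos hτ 2) (hτ.trans_le hτδ)]
  have h4 : δ * τ / 2 ≤ Real.log (1 + τ) / 2 - (1 / 2 - δ) / 2 * (2 * τ + τ ^ 2) := by linarith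
  nlinarith [mul_le_mul_of_nonneg_left h4 (sq_nonneg a)]

/-- The theorem, with constants `7`, for an `m`-fold symmetric patch `A ⊆ ℂ` containing the origin;
of the boundary only its description as a continuous curve is used. -/
lemma core {A : Set ℂ} (hAo : IsOpen A) (hbA : IsBounded A) (h0 : (0 : ℂ) ∈ A) {m : ℕ}
    (hm : 7 ≤ m) (hinv : RootInvariant m A) {γ : ℝ → ℂ} (hγ : Continuous γ)
    (hran : range γ = frontier A) {Ω c : ℝ}
    (hΨ : ∀ x ∈ frontier A,
      1 / (2 * π) * (∫ y in A, Real.log ‖x - y‖) - Ω / 2 * ‖x‖ ^ 2 = c)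
    (hnb : ¬ ∃ r : ℝ, A = Metric.ball (0 : ℂ) r) : 1 / 2 - Ω ≤ 7 / m := by
  have hm0 : 0 < m := by omega
  have hmR : (7 : ℝ) ≤ m := by exact_mod_cast hm
  have hπ := pi_pos
  have hcomp : IsCompact (frontier A) :=
    Metric.isCompact_of_isClosed_isBounded isClosed_frontier
      (hbA.closure.subset frontier_subset_closure)
  have hne : (frontier A).Nonempty := hran ▸ range_nonempty γ
  obtain ⟨x, hxf, hmin⟩ := hcomp.exists_isMinOn hne continuous_norm.continuousOn
  obtain ⟨z, hzf, hmax⟩ := hcomp.exists_isMaxOn hne continuous_norm.continuousOn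
  obtain ⟨a, hxa⟩ : ∃ a, ‖x‖ = a := ⟨_, rfl⟩
  obtain ⟨R, hzR⟩ : ∃ R, ‖z‖ = R := ⟨_, rfl⟩
  have hmin' : ∀ w ∈ frontier A, a ≤ ‖w‖ := fun w hw => hxa ▸ hmin hw
  have hmax' : ∀ w ∈ frontier A, ‖w‖ ≤ R := fun w hw => hzR ▸ hmax hw
  have hx0 : x ≠ 0 := by
    rintro rfl
    rw [hAo.frontier_eq] at hxf
    exact hxf.2 h0
  have ha : 0 < a := hxa ▸ norm_pos_iff.2 hx0
  have haR : a ≤ R := hzR ▸ hmin' z hzf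
  have hball := ball_subset_of_frontier hAo h0 hmin'
  have hsub := subset_closedBall_of_frontier hAo hbA hmax' (ha.le.trans haR)
  have haR' : a < R := by
    refine lt_of_le_of_ne haR fun h => hnb ⟨a, ?_⟩
    refine subset_antisymm ?_ hball
    rw [← interior_closedBall (0 : ℂ) ha.ne', h]
    exact interior_maximal hsub hAo
  have hAm := hAo.measurableSet
  by_contra! hδ
  set δ := 1 / 2 - Ω with hδdef
  have hΩ : Ω = 1 / 2 - δ := by rw [hδdef]; ring
  have h7 : (7 : ℝ) / m ≤ 1 := (div_le_one (by linarith)).2 hmR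
  have h7' : (0 : ℝ) < 7 / m := by positivity
  set η := min δ 1 with hη
  have hη7 : 7 / (m : ℝ) ≤ η := le_min hδ.le h7
  have hη1 : η ≤ 1 := min_le_right _ _
  have hηδ : η ≤ δ := min_le_left _ _
  -- the two-point comparison of `x` with a boundary point of radius `a (1 + τ)`
  have key : ∀ (x' : ℂ) (τ e : ℝ), x' ∈ frontier A → 0 < τ → τ ≤ η → ‖x'‖ = a * (1 + τ) →
      |∫ y in A, oscKer x y| ≤ 2 * π * e → |∫ y in A, oscKer x' y| ≤ 2 * π * e →
      a ^ 2 * (δ * τ / 2) ≤ 2 * e := by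
    intro x' τ e hx'f hτ hτη hx' he he'
    have h1 := two_point hbA ha hball hxa (x' := x') (by rw [hx']; nlinarith) he he'
      ((hΨ x hxf).trans (hΨ x' hx'f).symm)
    refine (main_term hτ (hτη.trans hηδ)).trans (le_trans (le_of_eq ?_) h1)
    rw [hx', mul_div_cancel_left₀ _ ha.ne', hΩ]
    ring
  have hbd : ∀ w : ℂ, w ≠ 0 → |∫ y in A, oscKer w y| ≤
      (1 / m : ℝ) * ∫ y in {y : ℂ | ‖y‖ ∈ Icc a R}, ratio w y ^ m := fun w hw =>
    abs_integral_oscKer_le hm0 hAm hinv hball hsub hw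
  by_cases hcase : R ≤ a * (1 + η)
  · -- Thin annulus: `τ = R / a - 1`, and the area of the annulus is at most `3π a² τ` as `τ ≤ 1`.
    set τ := R / a - 1 with hτdef
    have hRτ : R = a * (1 + τ) := by rw [hτdef]; field_simp; ring
    have hτ : 0 < τ := by
      have := (one_lt_div ha).2 haR'
      linarith
    have hτη : τ ≤ η := by
      rw [hRτ] at hcase
      have := le_of_mul_le_mul_left hcase ha
      linarith
    have hz0 : z ≠ 0 := norm_pos_iff.1 (by rw [hzR]; linarith)
    have hthin : ∀ w : ℂ, w ≠ 0 → |∫ y in A, oscKer w y| ≤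
        2 * π * (a ^ 2 * (3 * τ) / (2 * m)) := by
      intro w hw
      refine (hbd w hw).trans ?_
      have h1 := integral_ratio_pow_le_volume m ha.le haR w
      have h2 : R ^ 2 - a ^ 2 ≤ a ^ 2 * (3 * τ) := by
        have : τ ^ 2 ≤ τ := by nlinarith
        rw [hRτ]
        nlinarith [mul_le_mul_of_nonneg_left this (sq_nonneg a)]
      calc (1 / m : ℝ) * ∫ y in {y : ℂ | ‖y‖ ∈ Icc a R}, ratio w y ^ m
          ≤ (1 / m : ℝ) * (π * (a ^ 2 * (3 * τ))) := by
            gcongr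
            exact h1.trans (by gcongr)
        _ = _ := by field_simp
    have h := key z τ _ hzf hτ hτη (hzR.trans hRτ) (hthin x hx0) (hthin z hz0)
    have h' : (a ^ 2 * τ / 2) * δ ≤ (a ^ 2 * τ / 2) * (6 / m) := by
      calc (a ^ 2 * τ / 2) * δ = a ^ 2 * (δ * τ / 2) := by ring
        _ ≤ _ := h
        _ = _ := by field_simp; norm_num
    have h'' := le_of_mul_le_mul_left h' (by positivity)
    have : (6 : ℝ) / m ≤ 7 / m := by gcongr; norm_num
    linarith
  · -- Thick annulus: the curve crosses the radius `a (1 + η) ≤ 2 a`.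
    push Not at hcase
    have hη0 : 0 < η := h7'.trans_le hη7
    obtain ⟨s, hs⟩ : x ∈ range γ := hran ▸ hxf
    obtain ⟨t, ht⟩ : z ∈ range γ := hran ▸ hzf
    obtain ⟨u, hu⟩ : a * (1 + η) ∈ range (fun t => ‖γ t‖) := by
      refine mem_range_of_exists_le_of_exists_ge (by fun_prop) ⟨s, ?_⟩ ⟨t, ?_⟩
      · simp only [hs, hxa]; nlinarith
      · simp only [ht, hzR]; exact hcase.le
    have huf : γ u ∈ frontier A := hran ▸ mem_range_self u
    simp only at hu
    have hfat : ∀ w : ℂ, w ≠ 0 → ‖w‖ ≤ 2 * a → |∫ y in A, oscKer w y| ≤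
        2 * π * (12 * a ^ 2 / m ^ 2) := by
      intro w hw hwa
      refine (hbd w hw).trans ?_
      calc (1 / m : ℝ) * ∫ y in {y : ℂ | ‖y‖ ∈ Icc a R}, ratio w y ^ m
          ≤ (1 / m : ℝ) * (6 * π * ‖w‖ ^ 2 / m) := by
            gcongr
            exact integral_ratio_pow_le (by omega) _ hw
        _ ≤ (1 / m : ℝ) * (6 * π * (2 * a) ^ 2 / m) := by gcongr
        _ = _ := by field_simp; norm_num
    have hu0 : γ u ≠ 0 := norm_pos_iff.1 (by rw [hu]; positivity)
    have h := key (γ u) η _ huf hη0 le_rfl hu (hfat x hx0 (by rw [hxa]; linarith))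
      (hfat _ hu0 (by rw [hu]; nlinarith))
    have h' : (a ^ 2 / 2) * (δ * η) ≤ (a ^ 2 / 2) * (48 / m ^ 2) := by
      calc (a ^ 2 / 2) * (δ * η) = a ^ 2 * (δ * η / 2) := by ring
        _ ≤ _ := h
        _ = _ := by ring
    have h'' := le_of_mul_le_mul_left h' (by positivity)
    have h3 : 7 / (m : ℝ) * (7 / m) ≤ δ * η :=
      mul_le_mul hδ.le hη7 h7'.le (h7'.le.trans hδ.le)
    have h4 : 7 / (m : ℝ) * (7 / m) = 49 / m ^ 2 := by field_simp; norm_num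
    have h5 : (48 : ℝ) / m ^ 2 < 49 / m ^ 2 := by gcongr; norm_num
    linarith

/-! ### Transfer between the plane and the complex numbers -/

/-- The isometric identification `x + i y ↦ (x, y)` of `ℂ` with the plane. -/
def toPlane : ℂ ≃ₗᵢ[ℝ] R2 := Complex.orthonormalBasisOneI.repr

lemma toPlane_zero_coord (z : ℂ) : toPlane z 0 = z.re := by
  simp [toPlane, Complex.orthonormalBasisOneI_repr_apply]

lemma toPlane_one_coord (z : ℂ) : toPlane z 1 = z.im := by
  simp [toPlane, Complex.orthonormalBasisOneI_repr_apply]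

lemma rot_toPlane (α : ℝ) (z : ℂ) :
    rot α (toPlane z) = toPlane (Complex.exp (α * Complex.I) * z) := by
  ext i
  fin_cases i
  · simp [rot, pt, toPlane_zero_coord, toPlane_one_coord, Complex.exp_mul_I,
      ← Complex.ofReal_cos, ← Complex.ofReal_sin]
  · simp [rot, pt, toPlane_zero_coord, toPlane_one_coord, Complex.exp_mul_I,
      ← Complex.ofReal_cos, ← Complex.ofReal_sin]
    ring

/-- The primitive root of unity `exp(2πi/m)`, multiplication by which is `rot (2π/m)`. -/
def zeta (m : ℕ) : ℂ := Complex.exp (2 * π * Complex.I / m)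

lemma zeta_mul_mem {m : ℕ} {D : Set R2} (hD : MFoldSymmetric m D) (z : ℂ) :
    zeta m * z ∈ toPlane ⁻¹' D ↔ z ∈ toPlane ⁻¹' D := by
  have hz : zeta m = Complex.exp (((2 * π / m : ℝ) : ℂ) * Complex.I) := by
    unfold zeta; congr 1; push_cast; ring
  have hrot : ∀ w, rot (2 * π / m) (toPlane w) = toPlane (zeta m * w) := fun w => by
    rw [rot_toPlane, hz]
  unfold MFoldSymmetric at hD
  simp only [mem_preimage]
  constructor
  · intro h
    rw [← hD] at h
    obtain ⟨p, hp, hpe⟩ := h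
    obtain ⟨w, rfl⟩ := toPlane.surjective p
    rw [hrot] at hpe
    have := mul_left_cancel₀ (Complex.exp_ne_zero _) (toPlane.injective hpe)
    rwa [← this]
  · intro h
    rw [← hrot, ← hD]
    exact mem_image_of_mem _ h

lemma zeta_pow_mul_mem {m : ℕ} {D : Set R2} (hD : MFoldSymmetric m D) (k : ℕ) (z : ℂ) :
    zeta m ^ k * z ∈ toPlane ⁻¹' D ↔ z ∈ toPlane ⁻¹' D := by
  induction k with
  | zero => simp
  | succ k ih => rw [pow_succ', mul_assoc, zeta_mul_mem hD, ih]

lemma rootInvariant_of_symm {m : ℕ} (hm : 0 < m) {D : Set R2} (hD : MFoldSymmetric m D) :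
    RootInvariant m (toPlane ⁻¹' D) := by
  intro μ hμ z
  have : NeZero m := ⟨hm.ne'⟩
  obtain ⟨k, -, rfl⟩ := (Complex.isPrimitiveRoot_exp m hm.ne').eq_pow_of_pow_eq_one
    ((Polynomial.mem_nthRootsFinset hm _).1 hμ)
  exact zeta_pow_mul_mem hD k z

/-- For `m ≥ 2`, an `m`-fold symmetric simply connected open set contains the origin: otherwise
it carries a continuous logarithm `F`, and the constant increment `w` of `F` under the rotation satisfies
`m w = 0`. -/
lemma zero_mem_of_symm {m : ℕ} (hm : 2 ≤ m) {D : Set R2} (hDo : IsOpen D)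
    (hDs : SimplyConnectedSpace D) (hD : MFoldSymmetric m D) : (0 : ℂ) ∈ toPlane ⁻¹' D := by
  by_contra h0
  have hprim : IsPrimitiveRoot (zeta m) m := Complex.isPrimitiveRoot_exp m (by omega)
  set A : Set ℂ := toPlane ⁻¹' D with hA
  have hsc : IsSimplyConnected D := hDs
  obtain ⟨f, hfc, hf⟩ := Complex.exists_continuousOn_eqOn_exp_comp hsc hDo
    (g := toPlane.symm) toPlane.symm.continuous.continuousOn (by
      rintro ⟨p, hp, hp0⟩
      have hp' : p = 0 := by simpa using hp0
      subst hp'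
      exact h0 (by simpa [hA] using hp))
  -- the continuous logarithm of `z` on `A`
  set F : ℂ → ℂ := fun z => f (toPlane z) with hF
  have hFc : ContinuousOn F A := hfc.comp toPlane.continuous.continuousOn (fun z hz => hz)
  have hFe : ∀ z ∈ A, Complex.exp (F z) = z := fun z hz => by
    simpa using hf (show toPlane z ∈ D from hz)
  have hconnD : IsPreconnected D := isPreconnected_iff_preconnectedSpace.2 inferInstance
  have hAimg : A = toPlane.symm '' D := by
    ext z
    simp only [hA, mem_preimage, mem_image]
    exact ⟨fun h => ⟨_, h, by simp⟩, by rintro ⟨p, hp, rfl⟩; simpa using hp⟩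
  have hconn : IsPreconnected A := by
    rw [hAimg]; exact hconnD.image _ toPlane.symm.continuous.continuousOn
  have hne : A.Nonempty := by
    rw [hAimg]; exact hsc.nonempty.image _
  obtain ⟨z₀, hz₀⟩ := hne
  set w := F (zeta m * z₀) - F z₀ with hw
  have hmem : ∀ z ∈ A, zeta m * z ∈ A := fun z hz => (zeta_mul_mem hD z).2 hz
  have hz0 : ∀ z ∈ A, z ≠ 0 := fun z hz hz' => h0 (hz' ▸ hz)
  -- the increment of the logarithm differs from `w` by an integer multiple of `2πi` depending
  -- continuously on the point, hence by a constant one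
  have hconst : ∀ z ∈ A, F (zeta m * z) = F z + w := by
    have hexp : ∀ z ∈ A, Complex.exp (F (zeta m * z) - F z) = zeta m := fun z hz => by
      rw [Complex.exp_sub, hFe _ (hmem z hz), hFe z hz, mul_div_cancel_right₀ _ (hz0 z hz)]
    have hex : ∀ z : A, ∃ n : ℤ, F (zeta m * z) - F z = w + n * (2 * π * Complex.I) := fun z =>
      Complex.exp_eq_exp_iff_exists_int.1 ((hexp z z.2).trans (hexp z₀ hz₀).symm)
    choose n hn using hex
    have hcont : Continuous fun z : A => ((n z : ℤ) : ℝ) := by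
      have h1 : Continuous fun z : A => (F (zeta m * z) - F z - w).im / (2 * π) := by
        have h2 : Continuous fun z : A => F (zeta m * z) :=
          hFc.comp_continuous (by fun_prop) (fun z => hmem z z.2)
        have h3 : Continuous fun z : A => F z := hFc.comp_continuous (by fun_prop) (fun z => z.2)
        exact (Complex.continuous_im.comp ((h2.sub h3).sub continuous_const)).div_const _
      refine h1.congr fun z => ?_
      rw [hn z]
      have : w + n z * (2 * π * Complex.I) - w = ((n z * (2 * π) : ℝ) : ℂ) * Complex.I := by
        push_cast; ring
      rw [this, Complex.im_ofReal_mul, Complex.I_im]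
      field_simp
    have hcontn : Continuous n :=
      Int.isClosedEmbedding_coe_real.isInducing.continuous_iff.2 hcont
    have : PreconnectedSpace A := isPreconnected_iff_preconnectedSpace.1 hconn
    intro z hz
    have heq := PreconnectedSpace.constant this hcontn (x := ⟨z, hz⟩) (y := ⟨z₀, hz₀⟩)
    have h1 := hn ⟨z, hz⟩
    have h2 := hn ⟨z₀, hz₀⟩
    rw [heq] at h1
    simp only at h1 h2
    rw [← hw] at h2
    rw [← h2] at h1
    rw [← h1]; ring
  have hiter : ∀ k : ℕ, F (zeta m ^ k * z₀) = F z₀ + k * w := by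
    intro k
    induction k with
    | zero => simp
    | succ k ih =>
      rw [pow_succ', mul_assoc, hconst _ ((zeta_pow_mul_mem hD k z₀).2 hz₀), ih]
      push_cast; ring
  have hm1 := hiter m
  rw [hprim.pow_eq_one, one_mul, left_eq_add, mul_eq_zero] at hm1
  have hw0 : w = 0 := hm1.resolve_left (by exact_mod_cast (by omega : m ≠ 0))
  have h1 := hFe _ (hmem z₀ hz₀)
  rw [hconst z₀ hz₀, hw0, add_zero, hFe z₀ hz₀] at h1
  have h2 : zeta m = 1 := (mul_eq_right₀ (hz0 z₀ hz₀)).1 h1.symm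
  rw [h2] at hprim
  have := hprim.unique IsPrimitiveRoot.one
  omega

lemma patchConv_toPlane (D : Set R2) (x : ℂ) :
    patchConv D (toPlane x) = 1 / (2 * π) * ∫ y in toPlane ⁻¹' D, Real.log ‖x - y‖ := by
  unfold patchConv nker
  rw [integral_const_mul, ← toPlane.measurePreserving.setIntegral_preimage_emb
    toPlane.toMeasurableEquiv.measurableEmbedding]
  simp only [← map_sub, LinearIsometryEquiv.norm_map]

/-! ### The bound for patches in the plane -/

/-- For `m`-fold symmetric solutions which are not disks centered at the
origin, with `m ≥ m₀`, one has `1/2 − Ω ≤ c/m`. -/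
theorem mfold_angular_velocity_bound :
    ∃ m₀ : ℕ, 2 ≤ m₀ ∧ ∃ c > (0 : ℝ), ∀ (D : Set R2) (Ω : ℝ) (m : ℕ),
      IsPatchSolution D Ω → m₀ ≤ m → MFoldSymmetric m D →
      (¬ ∃ r : ℝ, D = Metric.ball (0 : R2) r) →
      1/2 - Ω ≤ c / m := by
  refine ⟨7, by norm_num, 7, by norm_num, ?_⟩
  rintro D Ω m ⟨hDo, hDb, hDs, ⟨γ, hγ, -, -, -, hran⟩, c, hc⟩ hm hsymm hnb
  have hfr : frontier (toPlane ⁻¹' D) = toPlane ⁻¹' frontier D :=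
    (toPlane.toHomeomorph.preimage_frontier D).symm
  refine core (A := toPlane ⁻¹' D) (γ := fun t => toPlane.symm (γ t)) (c := c)
    (hDo.preimage toPlane.continuous) ?_ (zero_mem_of_symm (by omega) hDo hDs hsymm) hm
    (rootInvariant_of_symm (by omega) hsymm) (toPlane.symm.continuous.comp hγ.continuous) ?_ ?_ ?_
  · obtain ⟨M, hM⟩ := hDb.subset_closedBall 0
    refine (Metric.isBounded_closedBall (x := (0 : ℂ)) (r := M)).subset fun z hz => ?_
    simpa using hM hz
  · rw [hfr, ← hran]
    ext z
    simp only [mem_range, mem_preimage]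
    refine exists_congr fun t => ?_
    exact ⟨fun h => by rw [← h]; simp, fun h => by rw [h]; simp⟩
  · intro x hx
    rw [hfr] at hx
    have := hc _ hx
    rwa [streamFun, patchConv_toPlane, LinearIsometryEquiv.norm_map] at this
  · rintro ⟨r, hr⟩
    refine hnb ⟨r, ?_⟩
    ext p
    obtain ⟨z, rfl⟩ := toPlane.surjective p
    rw [← mem_preimage, hr]
    simp
end
end
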